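/- arXiv:0806.3984 — 3 statements merged into one kernel-verified Lean document; each statement's English description precedes it below -/
import Mathlib

section
/- Strong subadditivity in conditional form: for any density operator Ω on a four-partite finite-dimensional system A'B'AB, S(A'B'|AB)_Ω ≤ S(A'|AB)_Ω + S(B'|AB)_Ω, where S(X|Y) = S(ρ^{XY}) − S(ρ^Y) is the conditional von Neumann entropy. -/
open Matrix Kronecker ComplexOrder

noncomputable section

/-- ω = e^{2πi/d} -/
noncomputable def qomega (d : ℕ) : ℂ := Complex.exp (2 * Real.pi * Complex.I / d)

/-- Generalized Pauli Z: Z|k⟩ = ω^k |k⟩. -/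
noncomputable def pauliZ (d : ℕ) : Matrix (Fin d) (Fin d) ℂ :=
  Matrix.diagonal fun k : Fin d => qomega d ^ (k : ℕ)

/-- Generalized Pauli X: X|k⟩ = |k+1 mod d⟩. -/
noncomputable def pauliX (d : ℕ) [NeZero d] : Matrix (Fin d) (Fin d) ℂ :=
  Matrix.of fun i j : Fin d => if i = j + 1 then 1 else 0

/-- Fourier matrix: column j is |x̃_j⟩ = (1/√d) Σ_k ω^{jk} |k⟩. -/
noncomputable def fourierMat (d : ℕ) : Matrix (Fin d) (Fin d) ℂ :=
  Matrix.of fun k j : Fin d => qomega d ^ ((j : ℕ) * (k : ℕ)) / (Real.sqrt d : ℂ)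

/-- density operator predicate -/
def IsDensity {n : Type*} [Fintype n] (ρ : Matrix n n ℂ) : Prop :=
  ρ.PosSemidef ∧ ρ.trace = 1

/-- von Neumann entropy in base 2, via eigenvalues. -/
noncomputable def vN {n : Type*} [Fintype n] [DecidableEq n] (ρ : Matrix n n ℂ) : ℝ :=
  if h : ρ.IsHermitian then ∑ i, -(h.eigenvalues i * Real.logb 2 (h.eigenvalues i)) else 0

/-- complete dephasing in the standard basis -/
def dephase {n : Type*} [DecidableEq n] (M : Matrix n n ℂ) : Matrix n n ℂ :=
  Matrix.of fun i j => if i = j then M i j else 0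

/-- dephasing of the first (A) factor of a bipartite state, standard (Z eigen-) basis -/
def dephaseA {a b : Type*} [DecidableEq a] (M : Matrix (a × b) (a × b) ℂ) :
    Matrix (a × b) (a × b) ℂ :=
  Matrix.of fun p q => if p.1 = q.1 then M p q else 0

/-- dephasing of the first (A) factor in the Fourier (X eigen-) basis -/
noncomputable def dephaseXA (d : ℕ) {b : Type*} [Fintype b] [DecidableEq b]
    (M : Matrix (Fin d × b) (Fin d × b) ℂ) : Matrix (Fin d × b) (Fin d × b) ℂ :=
  (fourierMat d ⊗ₖ (1 : Matrix b b ℂ)) *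
    dephaseA ((fourierMat d ⊗ₖ (1 : Matrix b b ℂ))ᴴ * M * (fourierMat d ⊗ₖ (1 : Matrix b b ℂ))) *
    (fourierMat d ⊗ₖ (1 : Matrix b b ℂ))ᴴ

/-- reduced state on A of a bipartite state -/
def r2A {a b : Type*} [Fintype b] (M : Matrix (a × b) (a × b) ℂ) : Matrix a a ℂ :=
  Matrix.of fun i j => ∑ y : b, M (i, y) (j, y)

/-- reduced state on B of a bipartite state -/
def r2B {a b : Type*} [Fintype a] (M : Matrix (a × b) (a × b) ℂ) : Matrix b b ℂ :=
  Matrix.of fun i j => ∑ x : a, M (x, i) (x, j)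

/-- reduced state on AB of a tripartite state on A ⊗ B ⊗ E -/
def rAB {a b e : Type*} [Fintype e] (M : Matrix (a × b × e) (a × b × e) ℂ) :
    Matrix (a × b) (a × b) ℂ :=
  Matrix.of fun p q => ∑ x : e, M (p.1, p.2, x) (q.1, q.2, x)

/-- reduced state on AE of a tripartite state -/
def rAE {a b e : Type*} [Fintype b] (M : Matrix (a × b × e) (a × b × e) ℂ) :
    Matrix (a × e) (a × e) ℂ :=
  Matrix.of fun p q => ∑ y : b, M (p.1, y, p.2) (q.1, y, q.2)

/-- reduced state on A of a tripartite state -/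
def rA {a b e : Type*} [Fintype b] [Fintype e] (M : Matrix (a × b × e) (a × b × e) ℂ) :
    Matrix a a ℂ :=
  Matrix.of fun i j => ∑ y : b, ∑ x : e, M (i, y, x) (j, y, x)

/-- reduced state on B of a tripartite state -/
def rB {a b e : Type*} [Fintype a] [Fintype e] (M : Matrix (a × b × e) (a × b × e) ℂ) :
    Matrix b b ℂ :=
  Matrix.of fun i j => ∑ x : a, ∑ z : e, M (x, i, z) (x, j, z)

/-- reduced state on E of a tripartite state -/
def rE {a b e : Type*} [Fintype a] [Fintype b] (M : Matrix (a × b × e) (a × b × e) ℂ) :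
    Matrix e e ℂ :=
  Matrix.of fun i j => ∑ x : a, ∑ y : b, M (x, y, i) (x, y, j)

/-- matrix logarithm (base 2) of a Hermitian matrix via spectral decomposition -/
noncomputable def mlog {n : Type*} [Fintype n] [DecidableEq n] (M : Matrix n n ℂ) :
    Matrix n n ℂ :=
  if h : M.IsHermitian then
    (h.eigenvectorUnitary : Matrix n n ℂ) *
      Matrix.diagonal (fun i => (Real.logb 2 (h.eigenvalues i) : ℂ)) *
      (h.eigenvectorUnitary : Matrix n n ℂ)ᴴ
  else 0

/-- quantum relative entropy S(ρ‖σ) = Tr[ρ(log₂ρ − log₂σ)] -/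
noncomputable def relEnt {n : Type*} [Fintype n] [DecidableEq n] (ρ σ : Matrix n n ℂ) : ℝ :=
  ((ρ * (mlog ρ - mlog σ)).trace).re

/-- trace norm of a Hermitian matrix -/
noncomputable def traceNorm {n : Type*} [Fintype n] [DecidableEq n] (M : Matrix n n ℂ) : ℝ :=
  if h : M.IsHermitian then ∑ i, |h.eigenvalues i| else 0


/-- reduced state on AB of a four-partite state on A' ⊗ B' ⊗ A ⊗ B -/
def r4AB {a' b' a b : Type*} [Fintype a'] [Fintype b']
    (M : Matrix (a' × b' × a × b) (a' × b' × a × b) ℂ) : Matrix (a × b) (a × b) ℂ :=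
  Matrix.of fun p q => ∑ x : a', ∑ y : b', M (x, y, p.1, p.2) (x, y, q.1, q.2)

/-- reduced state on A'AB -/
def r4ApAB {a' b' a b : Type*} [Fintype b']
    (M : Matrix (a' × b' × a × b) (a' × b' × a × b) ℂ) :
    Matrix (a' × a × b) (a' × a × b) ℂ :=
  Matrix.of fun p q => ∑ y : b', M (p.1, y, p.2.1, p.2.2) (q.1, y, q.2.1, q.2.2)

/-- reduced state on B'AB -/
def r4BpAB {a' b' a b : Type*} [Fintype a']
    (M : Matrix (a' × b' × a × b) (a' × b' × a × b) ℂ) :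
    Matrix (b' × a × b) (b' × a × b) ℂ :=
  Matrix.of fun p q => ∑ x : a', M (x, p.1, p.2.1, p.2.2) (x, q.1, q.2.1, q.2.2)

section ssa_helpers

def JJ {n : Type*} [Fintype n] (ρ σ : Matrix n n ℂ) (t : ℝ) (X : Matrix n n ℂ) : ℝ :=
  2 * (trace (Xᴴ * ρ)).re - (trace (X * Xᴴ * σ)).re - t * (trace (Xᴴ * X * ρ)).re

lemma JJ_eval {n : Type*} [Fintype n] [DecidableEq n] (U V Y : Matrix n n ℂ) (p q : n → ℝ) (t : ℝ)
    (hU : Uᴴ * U = 1) (hV : Vᴴ * V = 1) :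
    JJ (U * diagonal (fun i => (p i : ℂ)) * Uᴴ) (V * diagonal (fun i => (q i : ℂ)) * Vᴴ) t
      (V * Y * Uᴴ) =
    ∑ j, ∑ i, (2 * (star (Y j i) * (Vᴴ * U) j i).re * p i
      - (q j + t * p i) * Complex.normSq (Y j i)) := by
  set P := diagonal (fun i => (p i : ℂ)) with hP
  set Q := diagonal (fun i => (q i : ℂ)) with hQ
  have h1 : trace ((V * Y * Uᴴ)ᴴ * (U * P * Uᴴ)) = trace (Yᴴ * ((Vᴴ * U) * P)) := by
    rw [conjTranspose_mul, conjTranspose_mul, conjTranspose_conjTranspose]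
    calc _ = trace (U * (Yᴴ * Vᴴ * U * P * Uᴴ)) := by simp only [Matrix.mul_assoc]
      _ = trace (Yᴴ * Vᴴ * U * P * (Uᴴ * U)) := by rw [trace_mul_comm]; simp only [Matrix.mul_assoc]
      _ = _ := by rw [hU]; simp only [Matrix.mul_assoc, Matrix.mul_one]
  have h2 : trace ((V * Y * Uᴴ) * (V * Y * Uᴴ)ᴴ * (V * Q * Vᴴ)) = trace (Yᴴ * (Q * Y)) := by
    rw [conjTranspose_mul, conjTranspose_mul, conjTranspose_conjTranspose]
    calc _ = trace (V * (Y * (Uᴴ * U) * Yᴴ * (Vᴴ * V) * Q * Vᴴ)) := by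
            simp only [Matrix.mul_assoc]
      _ = trace (Y * (Yᴴ * Q) * (Vᴴ * V)) := by
            rw [trace_mul_comm, hU, hV]; simp only [Matrix.mul_assoc, Matrix.mul_one, hV]
      _ = _ := by rw [hV, Matrix.mul_one, trace_mul_comm]; simp only [Matrix.mul_assoc]
  have h3 : trace ((V * Y * Uᴴ)ᴴ * (V * Y * Uᴴ) * (U * P * Uᴴ)) = trace (Yᴴ * (Y * P)) := by
    rw [conjTranspose_mul, conjTranspose_mul, conjTranspose_conjTranspose]
    calc _ = trace (U * (Yᴴ * (Vᴴ * V) * Y * (Uᴴ * U) * P * Uᴴ)) := by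
            simp only [Matrix.mul_assoc]
      _ = trace (Yᴴ * (Y * P) * (Uᴴ * U)) := by
            rw [trace_mul_comm, hU, hV]; simp only [Matrix.mul_assoc, Matrix.mul_one, hU]
      _ = _ := by rw [hU, Matrix.mul_one]
  unfold JJ
  rw [h1, h2, h3]
  have e : ∀ Z : Matrix n n ℂ, (trace (Yᴴ * Z)).re = ∑ j, ∑ i, (star (Y j i) * Z j i).re := by
    intro Z
    rw [Finset.sum_comm]
    simp only [trace, diag, mul_apply, conjTranspose_apply, Complex.re_sum]
  rw [e, e, e, Finset.mul_sum, Finset.mul_sum, ← Finset.sum_sub_distrib, ← Finset.sum_sub_distrib]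
  refine Finset.sum_congr rfl fun j _ => ?_
  rw [Finset.mul_sum, Finset.mul_sum, ← Finset.sum_sub_distrib, ← Finset.sum_sub_distrib]
  refine Finset.sum_congr rfl fun i _ => ?_
  rw [hP, hQ, mul_diagonal, mul_diagonal, diagonal_mul]
  simp [Complex.normSq_apply]
  ring

def QQ {n : Type*} [Fintype n] (c : Matrix n n ℂ) (p q : n → ℝ) (t : ℝ) : ℝ :=
  ∑ j, ∑ i, Complex.normSq (c j i) * p i * (p i / (q j + t * p i))

lemma JJ_le {n : Type*} [Fintype n] [DecidableEq n] (U V X : Matrix n n ℂ) (p q : n → ℝ) (t : ℝ)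
    (hU : Uᴴ * U = 1) (hV : Vᴴ * V = 1) (hp : ∀ i, 0 ≤ p i) (hq : ∀ i, 0 ≤ q i) (ht : 0 < t) :
    JJ (U * diagonal (fun i => (p i : ℂ)) * Uᴴ) (V * diagonal (fun i => (q i : ℂ)) * Vᴴ) t X
      ≤ QQ (Vᴴ * U) p q t := by
  have hX : X = V * (Vᴴ * X * U) * Uᴴ := by
    have hU' := mul_eq_one_comm.mp hU
    have hV' := mul_eq_one_comm.mp hV
    calc X = (V * Vᴴ) * X * (U * Uᴴ) := by rw [hU', hV']; simp
      _ = _ := by simp only [Matrix.mul_assoc]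
  rw [hX, JJ_eval _ _ _ _ _ _ hU hV]
  refine Finset.sum_le_sum fun j _ => Finset.sum_le_sum fun i _ => ?_
  generalize (Vᴴ * X * U) j i = y
  generalize (Vᴴ * U) j i = c
  have hp := hp i
  have hq := hq j
  generalize p i = p at *
  generalize q j = q at *
  rcases hp.eq_or_lt with rfl | hp
  · simp
    exact mul_nonneg hq (Complex.normSq_nonneg _)
  · have hs : 0 < q + t * p := by positivity
    generalize q + t * p = s at *
    rw [← mul_div_assoc, le_div_iff₀ hs]
    simp [Complex.normSq_apply]
    nlinarith [sq_nonneg (s * y.re - c.re * p), sq_nonneg (s * y.im - c.im * p)]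

lemma JJ_attain {n : Type*} [Fintype n] [DecidableEq n] (U V : Matrix n n ℂ) (p q : n → ℝ) (t : ℝ)
    (hU : Uᴴ * U = 1) (hV : Vᴴ * V = 1) (hp : ∀ i, 0 ≤ p i) (hq : ∀ i, 0 ≤ q i) (ht : 0 < t) :
    ∃ X, JJ (U * diagonal (fun i => (p i : ℂ)) * Uᴴ) (V * diagonal (fun i => (q i : ℂ)) * Vᴴ) t X
      = QQ (Vᴴ * U) p q t := by
  refine ⟨V * (Matrix.of fun j i => (Vᴴ * U) j i * ((p i / (q j + t * p i) : ℝ) : ℂ)) * Uᴴ, ?_⟩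
  rw [JJ_eval _ _ _ _ _ _ hU hV]
  refine Finset.sum_congr rfl fun j _ => Finset.sum_congr rfl fun i _ => ?_
  rw [of_apply]
  generalize (Vᴴ * U) j i = c
  have hp := hp i
  have hq := hq j
  generalize p i = p at *
  generalize q j = q at *
  rcases hp.eq_or_lt with rfl | hp
  · simp
  · have hs : 0 < q + t * p := by positivity
    generalize q + t * p = s at *
    rw [map_mul, Complex.normSq_ofReal]
    have : (star (c * ((p / s : ℝ) : ℂ)) * c).re = Complex.normSq c * (p / s) := by
      rw [star_mul', Complex.star_def, Complex.conj_ofReal, mul_right_comm,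
        Complex.re_mul_ofReal, mul_comm _ c, Complex.mul_conj, Complex.ofReal_re]
    rw [this]
    field_simp
    ring

def GG {n : Type*} [Fintype n] (c : Matrix n n ℂ) (p q : n → ℝ) (t : ℝ) : ℝ :=
  ∑ j, ∑ i, Complex.normSq (c j i) * p i * (Real.log (q j + t * p i) - Real.log (q j))

def RR {n : Type*} [Fintype n] (c : Matrix n n ℂ) (p q : n → ℝ) : ℝ :=
  ∑ j, ∑ i, Complex.normSq (c j i) * p i * (Real.log (p i) - Real.log (q j))

lemma GG_deriv {n : Type*} [Fintype n] (c : Matrix n n ℂ) (p q : n → ℝ) (t : ℝ)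
    (hp : ∀ i, 0 ≤ p i) (hq : ∀ i, 0 ≤ q i) (ht : 0 ≤ t)
    (hs : ∀ j i, q j = 0 → Complex.normSq (c j i) * p i = 0) :
    HasDerivAt (GG c p q) (QQ c p q t) t := by
  unfold GG QQ
  refine HasDerivAt.fun_sum fun j _ => HasDerivAt.fun_sum fun i _ => ?_
  rcases (hq j).eq_or_lt with h | h
  · have := hs j i h.symm
    simp only [this, zero_mul]
    exact hasDerivAt_const _ _
  · refine HasDerivAt.const_mul _ (HasDerivAt.sub_const _ ?_)
    have h1 : HasDerivAt (fun t => q j + t * p i) (p i) t := by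
      simpa using ((hasDerivAt_id t).mul_const (p i)).const_add (q j)
    refine h1.log ?_
    have := mul_nonneg ht (hp i)
    linarith

lemma GG_tendsto {n : Type*} [Fintype n] (c : Matrix n n ℂ) (p q : n → ℝ)
    (hp : ∀ i, 0 ≤ p i) :
    Filter.Tendsto (fun t => GG c p q t - (∑ j, ∑ i, Complex.normSq (c j i) * p i) * Real.log t)
      Filter.atTop (nhds (RR c p q)) := by
  have e : (fun t => GG c p q t - (∑ j, ∑ i, Complex.normSq (c j i) * p i) * Real.log t)
      = fun t => ∑ j, ∑ i, Complex.normSq (c j i) * p i *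
        ((Real.log (q j + t * p i) - Real.log t) - Real.log (q j)) := by
    funext t
    unfold GG
    simp only [Finset.sum_mul, ← Finset.sum_sub_distrib]
    refine Finset.sum_congr rfl fun j _ => Finset.sum_congr rfl fun i _ => ?_
    ring
  rw [e]
  unfold RR
  refine tendsto_finsetSum _ fun j _ => tendsto_finsetSum _ fun i _ => ?_
  rcases (hp i).eq_or_lt with h | h
  · rw [← h]; simp
  · refine Filter.Tendsto.const_mul _ (Filter.Tendsto.sub_const ?_ _)
    have h1 : Filter.Tendsto (fun t : ℝ => q j / t + p i) Filter.atTop (nhds (p i)) := by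
      have : Filter.Tendsto (fun t : ℝ => q j / t) Filter.atTop (nhds 0) :=
        tendsto_const_nhds.div_atTop Filter.tendsto_id
      simpa using this.add_const (p i)
    have h2 := h1.log h.ne'
    refine h2.congr' ?_
    filter_upwards [Filter.eventually_gt_atTop 0, h1.eventually (eventually_gt_nhds h)] with t ht h3
    have : q j + t * p i = (q j / t + p i) * t := by field_simp
    rw [this, Real.log_mul h3.ne' ht.ne']
    ring

lemma RR_mono {m n : Type*} [Fintype m] [DecidableEq m] [Fintype n] [DecidableEq n]
    (U V ρ σ : Matrix n n ℂ) (p q : n → ℝ) (U' V' ρ' σ' : Matrix m m ℂ) (p' q' : m → ℝ)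
    (hU : Uᴴ * U = 1) (hV : Vᴴ * V = 1) (hp : ∀ i, 0 ≤ p i) (hq : ∀ i, 0 ≤ q i)
    (hU' : U'ᴴ * U' = 1) (hV' : V'ᴴ * V' = 1) (hp' : ∀ i, 0 ≤ p' i) (hq' : ∀ i, 0 ≤ q' i)
    (hρ : ρ = U * diagonal (fun i => (p i : ℂ)) * Uᴴ)
    (hσ : σ = V * diagonal (fun i => (q i : ℂ)) * Vᴴ)
    (hρ' : ρ' = U' * diagonal (fun i => (p' i : ℂ)) * U'ᴴ)
    (hσ' : σ' = V' * diagonal (fun i => (q' i : ℂ)) * V'ᴴ)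
    (hs : ∀ j i, q j = 0 → Complex.normSq ((Vᴴ * U) j i) * p i = 0)
    (hs' : ∀ j i, q' j = 0 → Complex.normSq ((V'ᴴ * U') j i) * p' i = 0)
    (htr : ∑ j, ∑ i, Complex.normSq ((Vᴴ * U) j i) * p i
      = ∑ j, ∑ i, Complex.normSq ((V'ᴴ * U') j i) * p' i)
    (E : Matrix m m ℂ → Matrix n n ℂ) (hE1 : ∀ X, E Xᴴ = (E X)ᴴ) (hE2 : ∀ X Y, E (X * Y) = E X * E Y)
    (hEρ : ∀ X, trace (E X * ρ) = trace (X * ρ')) (hEσ : ∀ X, trace (E X * σ) = trace (X * σ')) :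
    RR (V'ᴴ * U') p' q' ≤ RR (Vᴴ * U) p q := by
  have hQ : ∀ t, 0 < t → QQ (V'ᴴ * U') p' q' t ≤ QQ (Vᴴ * U) p q t := by
    intro t ht
    obtain ⟨X, hX⟩ := JJ_attain U' V' p' q' t hU' hV' hp' hq' ht
    rw [← hX]
    refine le_trans (le_of_eq ?_) (JJ_le U V (E X) p q t hU hV hp hq ht)
    rw [← hρ, ← hσ, ← hρ', ← hσ']
    unfold JJ
    rw [← hE1, ← hE2, ← hE2, hEρ, hEρ, hEσ]
  have hd : ∀ t, 0 ≤ t → HasDerivAt (fun t => GG (Vᴴ * U) p q t - GG (V'ᴴ * U') p' q' t)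
      (QQ (Vᴴ * U) p q t - QQ (V'ᴴ * U') p' q' t) t := fun t ht =>
    (GG_deriv _ _ _ _ hp hq ht hs).sub (GG_deriv _ _ _ _ hp' hq' ht hs')
  have hm : MonotoneOn (fun t => GG (Vᴴ * U) p q t - GG (V'ᴴ * U') p' q' t) (Set.Ici 0) := by
    refine monotoneOn_of_deriv_nonneg (convex_Ici 0)
      (fun t ht => (hd t ht).continuousAt.continuousWithinAt) ?_ ?_
    · intro t ht
      rw [interior_Ici] at ht
      exact (hd t (le_of_lt ht)).differentiableAt.differentiableWithinAt
    · intro t ht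
      rw [interior_Ici] at ht
      rw [(hd t (le_of_lt ht)).deriv]
      exact sub_nonneg.mpr (hQ t ht)
  refine le_of_tendsto_of_tendsto (GG_tendsto _ p' q' hp') (GG_tendsto _ p q hp) ?_
  filter_upwards [Filter.eventually_ge_atTop 0] with t ht
  rw [htr]
  have := hm (Set.mem_Ici.mpr le_rfl) (Set.mem_Ici.mpr ht) ht
  simp [GG] at this
  simp [GG]
  linarith

lemma sum_normSq {n : Type*} [Fintype n] [DecidableEq n] (U V ρ : Matrix n n ℂ) (p : n → ℝ)
    (hρ : ρ = U * diagonal (fun i => (p i : ℂ)) * Uᴴ) (j : n) :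
    ∑ i, Complex.normSq ((Vᴴ * U) j i) * p i = ((Vᴴ * ρ * V) j j).re := by
  have : Vᴴ * ρ * V = (Vᴴ * U) * diagonal (fun i => (p i : ℂ)) * (Vᴴ * U)ᴴ := by
    rw [hρ, conjTranspose_mul, conjTranspose_conjTranspose]; simp only [Matrix.mul_assoc]
  rw [this]
  generalize Vᴴ * U = c
  rw [mul_apply, Complex.re_sum]
  refine Finset.sum_congr rfl fun i _ => ?_
  rw [mul_diagonal, conjTranspose_apply]
  simp [Complex.normSq_apply]
  ring

lemma sum_normSq' {n : Type*} [Fintype n] [DecidableEq n] (U V : Matrix n n ℂ)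
    (hU : Uᴴ * U = 1) (hV : Vᴴ * V = 1) (i : n) :
    ∑ j, Complex.normSq ((Vᴴ * U) j i) = 1 := by
  have h : (Vᴴ * U)ᴴ * (Vᴴ * U) = 1 := by
    have hV' := mul_eq_one_comm.mp hV
    rw [conjTranspose_mul, conjTranspose_conjTranspose]
    calc _ = Uᴴ * (V * Vᴴ) * U := by simp only [Matrix.mul_assoc]
      _ = 1 := by rw [hV', Matrix.mul_one, hU]
  generalize Vᴴ * U = c at *
  have h2 := congrArg Complex.re (congrFun (congrFun h i) i)
  rw [mul_apply, Complex.re_sum] at h2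
  simpa [Complex.normSq_apply] using h2

lemma spec {n : Type*} [Fintype n] [DecidableEq n] (M : Matrix n n ℂ) (h : M.IsHermitian) :
    M = (h.eigenvectorUnitary : Matrix n n ℂ) * diagonal (fun i => (h.eigenvalues i : ℂ)) *
      (h.eigenvectorUnitary : Matrix n n ℂ)ᴴ := by
  conv_lhs => rw [h.spectral_theorem]
  rfl

lemma spec_unit {n : Type*} [Fintype n] [DecidableEq n] (M : Matrix n n ℂ) (h : M.IsHermitian) :
    (h.eigenvectorUnitary : Matrix n n ℂ)ᴴ * (h.eigenvectorUnitary : Matrix n n ℂ) = 1 :=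
  (Unitary.mem_iff.mp h.eigenvectorUnitary.2).1

lemma r2B_psd {k l : Type*} [Fintype k] [Fintype l] (M : Matrix (k × l) (k × l) ℂ)
    (h : M.PosSemidef) : (r2B M).PosSemidef := by
  have : r2B M = ∑ x : k, M.submatrix (fun y => (x, y)) (fun y => (x, y)) := by
    ext i j; simp [r2B, Matrix.sum_apply]
  rw [this]
  exact posSemidef_sum _ fun x _ => h.submatrix _

/-- data for M versus 1 ⊗ r2B M -/
lemma block_diag {k l : Type*} [Fintype k] [DecidableEq k] [Fintype l] [DecidableEq l]
    (M : Matrix (k × l) (k × l) ℂ) (W : Matrix l l ℂ) (x : k) (y : l) :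
    (((1 : Matrix k k ℂ) ⊗ₖ W)ᴴ * M * ((1 : Matrix k k ℂ) ⊗ₖ W)) (x, y) (x, y) =
      (Wᴴ * (M.submatrix (fun y => (x, y)) (fun y => (x, y))) * W) y y := by
  simp [mul_apply, Fintype.sum_prod_type, conjTranspose_apply, kroneckerMap_apply, one_apply,
    ite_mul, mul_ite, Finset.sum_ite_eq, apply_ite]

lemma diag_sum {k l : Type*} [Fintype k] [DecidableEq k] [Fintype l] [DecidableEq l]
    (M : Matrix (k × l) (k × l) ℂ) (h : (r2B M).IsHermitian) (y : l) :
    ∑ x : k, ((((1 : Matrix k k ℂ) ⊗ₖ (h.eigenvectorUnitary : Matrix l l ℂ))ᴴ * M *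
      ((1 : Matrix k k ℂ) ⊗ₖ (h.eigenvectorUnitary : Matrix l l ℂ))) (x, y) (x, y)).re
      = h.eigenvalues y := by
  simp only [block_diag]
  have e : r2B M = ∑ x : k, M.submatrix (fun y => (x, y)) (fun y => (x, y)) := by
    ext i j; simp [r2B, Matrix.sum_apply]
  have hs := spec _ h
  have hu := spec_unit _ h
  have h2 : (h.eigenvectorUnitary : Matrix l l ℂ)ᴴ * r2B M * (h.eigenvectorUnitary : Matrix l l ℂ)
      = diagonal (fun i => (h.eigenvalues i : ℂ)) := by
    generalize (h.eigenvectorUnitary : Matrix l l ℂ) = W at *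
    generalize h.eigenvalues = q at *
    rw [hs]
    calc _ = (Wᴴ * W) * diagonal (fun i => (q i : ℂ)) * (Wᴴ * W) := by simp only [Matrix.mul_assoc]
      _ = _ := by rw [hu]; simp
  have h3 := congrArg Complex.re (congrFun (congrFun h2 y) y)
  rw [diagonal_apply_eq, Complex.ofReal_re] at h3
  rw [← h3]
  generalize (h.eigenvectorUnitary : Matrix l l ℂ) = W
  conv_rhs => rw [e, Matrix.mul_sum, Matrix.sum_mul, Matrix.sum_apply, Complex.re_sum]

lemma supp {k l : Type*} [Fintype k] [DecidableEq k] [Fintype l] [DecidableEq l]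
    (M : Matrix (k × l) (k × l) ℂ) (hM : M.PosSemidef) (h : (r2B M).IsHermitian)
    (j : k × l) (i : k × l) (hj : h.eigenvalues j.2 = 0) :
    Complex.normSq (((((1 : Matrix k k ℂ) ⊗ₖ (h.eigenvectorUnitary : Matrix l l ℂ))ᴴ *
      (hM.1.eigenvectorUnitary : Matrix (k × l) (k × l) ℂ))) j i) * hM.1.eigenvalues i = 0 := by
  obtain ⟨x, y⟩ := j
  have hd := diag_sum M h y
  simp only [← sum_normSq _ _ M _ (spec M hM.1)] at hd
  simp only at hj
  rw [hj] at hd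
  have nn : ∀ x i, 0 ≤ Complex.normSq (((((1 : Matrix k k ℂ) ⊗ₖ (h.eigenvectorUnitary : Matrix l l ℂ))ᴴ *
      (hM.1.eigenvectorUnitary : Matrix (k × l) (k × l) ℂ))) (x, y) i) * hM.1.eigenvalues i :=
    fun x i => mul_nonneg (Complex.normSq_nonneg _) (hM.eigenvalues_nonneg i)
  rw [Finset.sum_eq_zero_iff_of_nonneg (fun x _ => Finset.sum_nonneg fun i _ => nn x i)] at hd
  have := hd x (Finset.mem_univ _)
  rw [Finset.sum_eq_zero_iff_of_nonneg (fun i _ => nn x i)] at this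
  exact this i (Finset.mem_univ _)

lemma kron_unit {k l : Type*} [Fintype k] [DecidableEq k] [Fintype l] [DecidableEq l]
    (W : Matrix l l ℂ) (hW : Wᴴ * W = 1) :
    ((1 : Matrix k k ℂ) ⊗ₖ W)ᴴ * ((1 : Matrix k k ℂ) ⊗ₖ W) = 1 := by
  rw [conjTranspose_kronecker, ← mul_kronecker_mul, hW]; simp

lemma kron_spec {k l : Type*} [Fintype k] [DecidableEq k] [Fintype l] [DecidableEq l]
    (N : Matrix l l ℂ) (h : N.IsHermitian) :
    (1 : Matrix k k ℂ) ⊗ₖ N = ((1 : Matrix k k ℂ) ⊗ₖ (h.eigenvectorUnitary : Matrix l l ℂ)) *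
      diagonal (fun i : k × l => (h.eigenvalues i.2 : ℂ)) *
      ((1 : Matrix k k ℂ) ⊗ₖ (h.eigenvectorUnitary : Matrix l l ℂ))ᴴ := by
  have : diagonal (fun i : k × l => (h.eigenvalues i.2 : ℂ))
      = (1 : Matrix k k ℂ) ⊗ₖ diagonal (fun i => (h.eigenvalues i : ℂ)) := by
    rw [← diagonal_one, diagonal_kronecker_diagonal]; simp
  rw [this, conjTranspose_kronecker, ← mul_kronecker_mul, ← mul_kronecker_mul, ← spec N h]
  simp

lemma htr_eval {n : Type*} [Fintype n] [DecidableEq n] (M : Matrix n n ℂ) (h : M.IsHermitian)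
    (V : Matrix n n ℂ) (hV : Vᴴ * V = 1) :
    ∑ j, ∑ i, Complex.normSq ((Vᴴ * (h.eigenvectorUnitary : Matrix n n ℂ)) j i) * h.eigenvalues i
      = M.trace.re := by
  rw [Finset.sum_comm]
  simp only [← Finset.sum_mul, sum_normSq' _ _ (spec_unit M h) hV, one_mul]
  rw [h.trace_eq_sum_eigenvalues, Complex.re_sum]
  simp

lemma RR_eval {k l : Type*} [Fintype k] [DecidableEq k] [Fintype l] [DecidableEq l]
    (M : Matrix (k × l) (k × l) ℂ) (hM : M.IsHermitian) (h : (r2B M).IsHermitian) :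
    RR (((1 : Matrix k k ℂ) ⊗ₖ (h.eigenvectorUnitary : Matrix l l ℂ))ᴴ *
      (hM.eigenvectorUnitary : Matrix (k × l) (k × l) ℂ)) hM.eigenvalues
      (fun j => h.eigenvalues j.2) = Real.log 2 * (vN (r2B M) - vN M) := by
  have hl : Real.log 2 ≠ 0 := (Real.log_pos one_lt_two).ne'
  have hv : ∀ {n : Type _} [Fintype n] [DecidableEq n] (N : Matrix n n ℂ) (hN : N.IsHermitian),
      Real.log 2 * vN N = - ∑ i, hN.eigenvalues i * Real.log (hN.eigenvalues i) := by
    intro n _ _ N hN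
    rw [vN, dif_pos hN, Finset.mul_sum, ← Finset.sum_neg_distrib]
    refine Finset.sum_congr rfl fun i _ => ?_
    rw [Real.logb]; field_simp
  have hv2 : Real.log 2 * vN (r2B M) = - ∑ i, h.eigenvalues i * Real.log (h.eigenvalues i) := by
    rw [vN, dif_pos h, Finset.mul_sum, ← Finset.sum_neg_distrib]
    refine Finset.sum_congr rfl fun i _ => ?_
    rw [Real.logb]; field_simp
  rw [mul_sub, hv M hM, hv2]
  unfold RR
  simp only [mul_sub, Finset.sum_sub_distrib]
  rw [Finset.sum_comm]
  simp only [mul_assoc]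
  simp only [← Finset.sum_mul, sum_normSq' _ _ (spec_unit M hM) (kron_unit _ (spec_unit _ h)),
    one_mul]
  simp only [← mul_assoc, ← Finset.sum_mul, sum_normSq _ _ M _ (spec M hM)]
  have hfin : ∑ j : k × l, ((((1 : Matrix k k ℂ) ⊗ₖ (h.eigenvectorUnitary : Matrix l l ℂ))ᴴ * M *
      ((1 : Matrix k k ℂ) ⊗ₖ (h.eigenvectorUnitary : Matrix l l ℂ))) j j).re *
      Real.log (h.eigenvalues j.2) = ∑ i, h.eigenvalues i * Real.log (h.eigenvalues i) := by
    rw [Fintype.sum_prod_type_right]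
    refine Finset.sum_congr rfl fun y _ => ?_
    dsimp only
    rw [← Finset.sum_mul, diag_sum M h]
  rw [hfin]
  ring

def EE {a' b' c : Type*} [DecidableEq b'] (X : Matrix (a' × c) (a' × c) ℂ) :
    Matrix (a' × b' × c) (a' × b' × c) ℂ :=
  Matrix.of fun i j => if i.2.1 = j.2.1 then X (i.1, i.2.2) (j.1, j.2.2) else 0

lemma EE_star {a' b' c : Type*} [DecidableEq b'] (X : Matrix (a' × c) (a' × c) ℂ) :
    EE (b' := b') Xᴴ = (EE X)ᴴ := by
  ext i j
  by_cases h : i.2.1 = j.2.1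
  · simp [EE, conjTranspose_apply, h]
  · simp [EE, conjTranspose_apply, h, Ne.symm h]

lemma EE_mul {a' b' c : Type*} [DecidableEq b'] [Fintype a'] [Fintype b'] [Fintype c]
    (X Y : Matrix (a' × c) (a' × c) ℂ) :
    EE (b' := b') (X * Y) = EE X * EE Y := by
  ext ⟨i1, i2, i3⟩ ⟨j1, j2, j3⟩
  simp only [EE, of_apply, mul_apply, Fintype.sum_prod_type]
  by_cases h : i2 = j2
  · subst h
    simp [ite_mul]
  · simp [h]

lemma EE_trace {a' b' c : Type*} [DecidableEq b'] [Fintype a'] [Fintype b'] [Fintype c]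
    (X : Matrix (a' × c) (a' × c) ℂ) (ρ : Matrix (a' × b' × c) (a' × b' × c) ℂ) :
    trace (EE X * ρ) = trace (X * Matrix.of fun p q : a' × c =>
      ∑ y : b', ρ (p.1, y, p.2) (q.1, y, q.2)) := by
  simp only [EE, of_apply, trace, diag, mul_apply, Fintype.sum_prod_type, Finset.mul_sum]
  refine Finset.sum_congr rfl fun x _ => ?_
  rw [Finset.sum_comm]
  refine Finset.sum_congr rfl fun z _ => ?_
  rw [Finset.sum_comm]
  refine Finset.sum_congr rfl fun x' _ => ?_
  rw [Finset.sum_comm (s := (Finset.univ : Finset c))]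
  refine Finset.sum_congr rfl fun y _ => ?_
  rw [Finset.sum_comm]
  simp

end ssa_helpers

/-- strong subadditivity in conditional form,
S(A'B'|AB) ≤ S(A'|AB) + S(B'|AB). -/
theorem ssa_conditional {a' b' a b : Type*}
    [Fintype a'] [DecidableEq a'] [Fintype b'] [DecidableEq b']
    [Fintype a] [DecidableEq a] [Fintype b] [DecidableEq b]
    (Ω : Matrix (a' × b' × a × b) (a' × b' × a × b) ℂ) (hΩ : IsDensity Ω) :
    vN Ω - vN (r4AB Ω) ≤
      (vN (r4ApAB Ω) - vN (r4AB Ω)) + (vN (r4BpAB Ω) - vN (r4AB Ω)) := by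
  have hP := hΩ.1
  have hA : (r4ApAB Ω).PosSemidef := by
    have : r4ApAB Ω = ∑ y : b', Ω.submatrix (fun p : a' × a × b => (p.1, y, p.2))
        (fun p : a' × a × b => (p.1, y, p.2)) := by
      ext i j; simp [r4ApAB, Matrix.sum_apply]
    rw [this]
    exact posSemidef_sum _ fun x _ => hP.submatrix _
  have e1 : r4BpAB Ω = r2B Ω := rfl
  have e2 : r4AB Ω = r2B (r4ApAB Ω) := rfl
  have hB := r2B_psd Ω hP
  have hC := r2B_psd _ hA
  have hV := kron_unit (k := a') _ (spec_unit _ hB.1)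
  have hV' := kron_unit (k := a') _ (spec_unit _ hC.1)
  have key := RR_mono _ _ Ω ((1 : Matrix a' a' ℂ) ⊗ₖ r2B Ω) _ _
    _ _ (r4ApAB Ω) ((1 : Matrix a' a' ℂ) ⊗ₖ r2B (r4ApAB Ω)) _ _
    (spec_unit _ hP.1) hV hP.eigenvalues_nonneg (fun i => hB.eigenvalues_nonneg i.2)
    (spec_unit _ hA.1) hV' hA.eigenvalues_nonneg (fun i => hC.eigenvalues_nonneg i.2)
    (spec _ hP.1) (kron_spec _ hB.1) (spec _ hA.1) (kron_spec _ hC.1)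
    (fun j i => supp Ω hP hB.1 j i) (fun j i => supp _ hA hC.1 j i)
    (by
      rw [htr_eval _ _ _ hV, htr_eval _ _ _ hV']
      congr 1
      simp only [trace, diag, r4ApAB, of_apply, Fintype.sum_prod_type]
      refine Finset.sum_congr rfl fun x _ => ?_
      rw [Finset.sum_comm]
      refine Finset.sum_congr rfl fun y _ => ?_
      rw [Finset.sum_comm])
    EE EE_star EE_mul (fun X => EE_trace X Ω)
    (by
      intro X
      rw [EE_trace]
      congr 2
      ext p q
      simp only [of_apply, kroneckerMap_apply, r2B, r4ApAB]
      rw [Finset.sum_comm, Finset.mul_sum])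
  rw [RR_eval, RR_eval] at key
  have := le_of_mul_le_mul_left key (Real.log_pos one_lt_two)
  rw [e1, e2]
  linarith
end
end

section
/- For any bipartite state ρ^{AB} on ℂ^d ⊗ H^B: S(Z^A|B)_ρ + S(X^A|B)_ρ ≥ log₂ d + S(A|B)_ρ, where S(Z^A|B)_ρ (resp. S(X^A|B)_ρ) is the conditional entropy of ρ after dephasing A in the Z (resp. X) eigenbasis. -/
open Matrix Kronecker ComplexOrder

noncomputable section

set_option linter.unusedSectionVars false
set_option linter.unusedSimpArgs false
structure Dcp {n : Type*} [Fintype n] [DecidableEq n] (U : Matrix n n ℂ) (p : n → ℝ)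
    (ρ : Matrix n n ℂ) : Prop where
  left : Uᴴ * U = 1
  right : U * Uᴴ = 1
  eq : ρ = U * Matrix.diagonal (fun i => (p i : ℂ)) * Uᴴ

section core
variable {n : Type*} [Fintype n] [DecidableEq n]

/-- overlap weights -/
def ovl (V U : Matrix n n ℂ) (j i : n) : ℝ := Complex.normSq ((Vᴴ * U) j i)

lemma ovl_nonneg (V U : Matrix n n ℂ) (j i : n) : 0 ≤ ovl V U j i := Complex.normSq_nonneg _

def Fq (U : Matrix n n ℂ) (p : n → ℝ) (V : Matrix n n ℂ) (q : n → ℝ) (t : ℝ) : ℝ :=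
  ∑ i, ∑ j, ovl V U j i * (p i ^ 2 / (q j + t * p i))

lemma Dcp.psd {U : Matrix n n ℂ} {p : n → ℝ} {ρ : Matrix n n ℂ} (h : Dcp U p ρ)
    (hp : ∀ i, 0 ≤ p i) : ρ.PosSemidef := by
  rw [h.eq]
  apply Matrix.PosSemidef.mul_mul_conjTranspose_same
  apply Matrix.PosSemidef.diagonal
  intro i
  simpa using hp i

lemma exists_W {U V ρ σ : Matrix n n ℂ} {p q : n → ℝ} (hρ : Dcp U p ρ) (hσ : Dcp V q σ)
    (hp : ∀ i, 0 ≤ p i) (hq : ∀ i, 0 < q i) {t : ℝ} (ht : 0 ≤ t) :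
    ∃ W : Matrix n n ℂ, σ * W + (t : ℂ) • (W * ρ) = ρ ∧ ((ρ * W).trace).re = Fq U p V q t := by
  set C := Vᴴ * U with hC
  set M : Matrix n n ℂ := Matrix.of fun j i => C j i * ((p i / (q j + t * p i) : ℝ) : ℂ) with hM
  have hUU := hρ.left
  have hVV := hσ.left
  refine ⟨V * M * Uᴴ, ?_, ?_⟩
  · have h1 : σ * (V * M * Uᴴ) = V * (diagonal (fun i => (q i : ℂ)) * M) * Uᴴ := by
      rw [hσ.eq]
      calc _ = V * diagonal (fun i => (q i : ℂ)) * (Vᴴ * V) * M * Uᴴ := by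
            simp only [Matrix.mul_assoc]
        _ = _ := by rw [hVV]; simp only [Matrix.mul_assoc, Matrix.mul_one, Matrix.one_mul]
    have h2 : (V * M * Uᴴ) * ρ = V * (M * diagonal (fun i => (p i : ℂ))) * Uᴴ := by
      rw [hρ.eq]
      calc _ = V * M * (Uᴴ * U) * diagonal (fun i => (p i : ℂ)) * Uᴴ := by
            simp only [Matrix.mul_assoc]
        _ = _ := by rw [hUU]; simp only [Matrix.mul_assoc, Matrix.mul_one, Matrix.one_mul]
    have h3 : ρ = V * (C * diagonal (fun i => (p i : ℂ))) * Uᴴ := by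
      rw [hC]
      calc ρ = (V * Vᴴ) * U * diagonal (fun i => (p i : ℂ)) * Uᴴ := by
            rw [hσ.right, Matrix.one_mul]; exact hρ.eq
        _ = _ := by simp only [Matrix.mul_assoc]
    rw [h1, h2]
    conv_rhs => rw [h3]
    rw [← Matrix.smul_mul, ← Matrix.mul_smul, ← Matrix.add_mul, ← Matrix.mul_add]
    congr 2
    ext j i
    have hpos : (q j + t * p i : ℝ) ≠ 0 := by
      have := hq j; have := mul_nonneg ht (hp i); positivity
    have hpos' : ((q j : ℂ) + p i * t) ≠ 0 := by rw [mul_comm]; exact_mod_cast hpos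
    simp only [Matrix.add_apply, Matrix.smul_apply, Matrix.diagonal_mul, Matrix.mul_diagonal, hM,
      Matrix.of_apply, smul_eq_mul]
    push_cast
    field_simp
  · have h1 : (ρ * (V * M * Uᴴ)).trace = (diagonal (fun i => (p i : ℂ)) * (Cᴴ * M)).trace := by
      rw [hρ.eq]
      calc _ = (U * (diagonal (fun i => (p i : ℂ)) * Uᴴ * V * M * Uᴴ)).trace := by
            simp only [Matrix.mul_assoc]
        _ = (diagonal (fun i => (p i : ℂ)) * Uᴴ * V * M * (Uᴴ * U)).trace := by
            rw [Matrix.trace_mul_comm]; simp only [Matrix.mul_assoc]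
        _ = _ := by
            rw [hUU, hC, Matrix.conjTranspose_mul, Matrix.conjTranspose_conjTranspose]
            simp only [Matrix.mul_assoc, Matrix.mul_one]
    rw [h1, Fq]
    simp only [Matrix.trace, Matrix.diag_apply, Matrix.diagonal_mul, Complex.re_sum]
    refine Finset.sum_congr rfl fun i _ => ?_
    rw [Matrix.mul_apply, Complex.re_ofReal_mul, Complex.re_sum, Finset.mul_sum]
    refine Finset.sum_congr rfl fun j _ => ?_
    rw [Matrix.conjTranspose_apply, hM, Matrix.of_apply, ← mul_assoc, Complex.re_mul_ofReal]
    have : (star (C j i) * C j i).re = ovl V U j i := by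
      rw [ovl, ← hC, Complex.star_def, ← Complex.normSq_eq_conj_mul_self, Complex.ofReal_re]
    rw [this]
    ring

lemma sup_bound {U V ρ σ : Matrix n n ℂ} {p q : n → ℝ} (hρ : Dcp U p ρ) (hσ : Dcp V q σ)
    (hp : ∀ i, 0 ≤ p i) (hq : ∀ i, 0 < q i) {t : ℝ} (ht : 0 ≤ t) (W : Matrix n n ℂ) :
    2 * ((ρ * W).trace).re - ((Wᴴ * (σ * W)).trace).re - t * ((Wᴴ * (W * ρ)).trace).re
      ≤ Fq U p V q t := by
  obtain ⟨W₀, hW, hF⟩ := exists_W hρ hσ hp hq ht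
  have P1 := hρ.psd hp
  have P2 := hσ.psd (fun i => (hq i).le)
  set Y := W - W₀ with hY
  have k1 : 0 ≤ ((Yᴴ * (σ * Y)).trace).re := by
    have := (P2.conjTranspose_mul_mul_same Y).trace_nonneg
    rw [Matrix.mul_assoc] at this
    exact (Complex.le_def.1 this).1
  have k2 : 0 ≤ ((Yᴴ * (Y * ρ)).trace).re := by
    have := (P1.mul_mul_conjTranspose_same Y).trace_nonneg
    rw [Matrix.trace_mul_comm] at this
    exact (Complex.le_def.1 this).1
  have hWa : Wᴴ * (σ * W₀) + (t : ℂ) • (Wᴴ * (W₀ * ρ)) = Wᴴ * ρ := by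
    rw [← Matrix.mul_smul, ← Matrix.mul_add, hW]
  have hWb : W₀ᴴ * (σ * W₀) + (t : ℂ) • (W₀ᴴ * (W₀ * ρ)) = W₀ᴴ * ρ := by
    rw [← Matrix.mul_smul, ← Matrix.mul_add, hW]
  have re_conj : ∀ X : Matrix n n ℂ, (Xᴴ.trace).re = X.trace.re := by
    intro X; rw [Matrix.trace_conjTranspose]; simp
  have e1 : ((W₀ᴴ * (σ * W)).trace).re = ((Wᴴ * (σ * W₀)).trace).re := by
    rw [← re_conj]
    simp only [Matrix.conjTranspose_mul, Matrix.conjTranspose_conjTranspose, P2.1.eq,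
      Matrix.mul_assoc]
  have e2 : ((W₀ᴴ * (W * ρ)).trace).re = ((Wᴴ * (W₀ * ρ)).trace).re := by
    rw [← re_conj]
    simp only [Matrix.conjTranspose_mul, Matrix.conjTranspose_conjTranspose, P1.1.eq]
    rw [Matrix.mul_assoc, Matrix.trace_mul_comm, Matrix.mul_assoc]
  have e3 : ∀ X : Matrix n n ℂ, ((Xᴴ * ρ).trace).re = ((ρ * X).trace).re := by
    intro X
    rw [← re_conj]
    simp only [Matrix.conjTranspose_mul, Matrix.conjTranspose_conjTranspose, P1.1.eq]
  have ta := congrArg (fun X => X.trace.re) hWa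
  have tb := congrArg (fun X => X.trace.re) hWb
  simp only [Matrix.trace_add, Matrix.trace_smul, Complex.add_re, smul_eq_mul,
    Complex.re_ofReal_mul, e3] at ta tb
  rw [hF] at tb
  have x1 : ((Yᴴ * (σ * Y)).trace).re = ((Wᴴ * (σ * W)).trace).re
      - ((Wᴴ * (σ * W₀)).trace).re - ((W₀ᴴ * (σ * W)).trace).re + ((W₀ᴴ * (σ * W₀)).trace).re := by
    simp only [hY, Matrix.conjTranspose_sub, Matrix.sub_mul, Matrix.mul_sub, Matrix.trace_sub,
      Complex.sub_re]
    ring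
  have x2 : ((Yᴴ * (Y * ρ)).trace).re = ((Wᴴ * (W * ρ)).trace).re
      - ((Wᴴ * (W₀ * ρ)).trace).re - ((W₀ᴴ * (W * ρ)).trace).re + ((W₀ᴴ * (W₀ * ρ)).trace).re := by
    simp only [hY, Matrix.conjTranspose_sub, Matrix.sub_mul, Matrix.mul_sub, Matrix.trace_sub,
      Complex.sub_re]
    ring
  have k3 := mul_nonneg ht k2
  rw [x2] at k3
  rw [x1] at k1
  rw [e1] at k1
  rw [e2] at k3
  nlinarith

end core

section deph
variable {a b : Type*} [Fintype a] [DecidableEq a] [Fintype b] [DecidableEq b]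

lemma dephaseA_mul_left (X Y : Matrix (a × b) (a × b) ℂ) :
    dephaseA (dephaseA X * Y) = dephaseA X * dephaseA Y := by
  ext p q
  simp only [dephaseA, Matrix.of_apply, Matrix.mul_apply]
  split_ifs with h
  · refine Finset.sum_congr rfl fun r _ => ?_
    by_cases h1 : p.1 = r.1
    · simp [← h1, h]
    · simp [h1]
  · symm
    refine Finset.sum_eq_zero fun r _ => ?_
    by_cases h1 : p.1 = r.1
    · simp [← h1, h]
    · simp [h1]

lemma dephaseA_mul_right (X Y : Matrix (a × b) (a × b) ℂ) :
    dephaseA (X * dephaseA Y) = dephaseA X * dephaseA Y := by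
  ext p q
  simp only [dephaseA, Matrix.of_apply, Matrix.mul_apply]
  split_ifs with h
  · refine Finset.sum_congr rfl fun r _ => ?_
    by_cases h1 : r.1 = q.1
    · simp [h1, h]
    · simp [h1]
  · symm
    refine Finset.sum_eq_zero fun r _ => ?_
    by_cases h1 : p.1 = r.1
    · simp [← h1, h]
    · simp [h1]

lemma dephaseA_idem (X : Matrix (a × b) (a × b) ℂ) : dephaseA (dephaseA X) = dephaseA X := by
  ext p q
  simp only [dephaseA, Matrix.of_apply]
  split_ifs <;> rfl

lemma dephaseA_conj (X : Matrix (a × b) (a × b) ℂ) : (dephaseA X)ᴴ = dephaseA Xᴴ := by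
  ext p q
  simp only [dephaseA, Matrix.of_apply, Matrix.conjTranspose_apply]
  by_cases h : p.1 = q.1
  · simp [h]
  · simp [h, Ne.symm h]

lemma dephaseA_trace (X : Matrix (a × b) (a × b) ℂ) : (dephaseA X).trace = X.trace := by
  simp [dephaseA, Matrix.trace]

lemma dephaseA_add (X Y : Matrix (a × b) (a × b) ℂ) :
    dephaseA (X + Y) = dephaseA X + dephaseA Y := by
  ext p q
  simp only [dephaseA, Matrix.of_apply, Matrix.add_apply]
  split_ifs <;> simp

lemma dephaseA_smul (c : ℂ) (X : Matrix (a × b) (a × b) ℂ) :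
    dephaseA (c • X) = c • dephaseA X := by
  ext p q
  simp only [dephaseA, Matrix.of_apply, Matrix.smul_apply]
  split_ifs <;> simp

lemma dephaseA_one : dephaseA (1 : Matrix (a × b) (a × b) ℂ) = 1 := by
  ext p q
  simp only [dephaseA, Matrix.of_apply, Matrix.one_apply]
  by_cases h : p = q
  · simp [h]
  · simp [h]

/-- trace against block diagonal -/
lemma dephaseA_trace_mul (X Y : Matrix (a × b) (a × b) ℂ) :
    (dephaseA X * Y).trace = (X * dephaseA Y).trace := by
  rw [← dephaseA_trace, dephaseA_mul_left, ← dephaseA_mul_right, dephaseA_trace]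

lemma Fq_mono {U V U' V' ρ σ : Matrix (a × b) (a × b) ℂ} {p q p' q' : a × b → ℝ}
    (hρ : Dcp U p ρ) (hσ : Dcp V q σ)
    (hρ' : Dcp U' p' (dephaseA ρ)) (hσ' : Dcp V' q' (dephaseA σ))
    (hp : ∀ i, 0 ≤ p i) (hq : ∀ i, 0 < q i) (hp' : ∀ i, 0 ≤ p' i) (hq' : ∀ i, 0 < q' i)
    {t : ℝ} (ht : 0 ≤ t) : Fq U' p' V' q' t ≤ Fq U p V q t := by
  obtain ⟨W₀, hW, hF⟩ := exists_W hρ' hσ' hp' hq' ht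
  set W := dephaseA W₀ with hWdef
  have hWd : dephaseA W = W := dephaseA_idem _
  have hW1 : dephaseA σ * W + (t : ℂ) • (W * dephaseA ρ) = dephaseA ρ := by
    have := congrArg dephaseA hW
    rwa [dephaseA_add, dephaseA_smul, dephaseA_mul_left, dephaseA_mul_right, dephaseA_idem] at this
  have hF1 : ((dephaseA ρ * W).trace).re = Fq U' p' V' q' t := by
    rw [← hF, hWdef, ← dephaseA_trace_mul, dephaseA_idem]
  refine le_trans (le_of_eq ?_) (sup_bound hρ hσ hp hq ht W)
  have z1 : (ρ * W).trace = (dephaseA ρ * W).trace := by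
    rw [dephaseA_trace_mul, hWd]
  have hWc : dephaseA Wᴴ = Wᴴ := by rw [← dephaseA_conj, hWd]
  have hWW : dephaseA (W * Wᴴ) = W * Wᴴ := by
    rw [← hWd, dephaseA_mul_left, hWd, hWc]
  have hWW' : dephaseA (Wᴴ * W) = Wᴴ * W := by
    rw [← hWc, dephaseA_mul_left, hWd, hWc]
  have z2 : (Wᴴ * (σ * W)).trace = (Wᴴ * (dephaseA σ * W)).trace := by
    rw [Matrix.trace_mul_comm, Matrix.mul_assoc, ← hWW, ← dephaseA_trace_mul,
      Matrix.trace_mul_comm Wᴴ, Matrix.mul_assoc]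
  have z3 : (Wᴴ * (W * ρ)).trace = (Wᴴ * (W * dephaseA ρ)).trace := by
    rw [← Matrix.mul_assoc, Matrix.trace_mul_comm, ← hWW', ← dephaseA_trace_mul,
      Matrix.trace_mul_comm (dephaseA ρ), Matrix.mul_assoc]
  have tb := congrArg (fun X => (Wᴴ * X).trace.re) hW1
  simp only [Matrix.mul_add, Matrix.mul_smul, Matrix.trace_add, Matrix.trace_smul, Complex.add_re, smul_eq_mul,
    Complex.re_ofReal_mul] at tb
  have e3 : ((Wᴴ * dephaseA ρ).trace).re = ((dephaseA ρ * W).trace).re := by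
    rw [← Complex.conj_re, ← Complex.star_def, ← Matrix.trace_conjTranspose]
    simp only [Matrix.conjTranspose_mul, Matrix.conjTranspose_conjTranspose, (hρ'.psd hp').1.eq]
  rw [z1, z2, z3, ← hF1]
  linarith
end deph
section scalar
open Filter Topology

lemma scalar_limit {m : Type*} [Fintype m] (w p q : m → ℝ) (hp : ∀ i, 0 ≤ p i)
    (hq : ∀ i, 0 < q i) :
    Tendsto (fun T : ℝ => ∑ i, w i * (p i * Real.log (q i + T * p i))
      - ∑ i, w i * (p i * Real.log (q i)) - (∑ i, w i * p i) * Real.log T) atTop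
      (𝓝 (∑ i, w i * (p i * (Real.log (p i) - Real.log (q i))))) := by
  have key : ∀ i, Tendsto (fun T : ℝ => w i * (p i * (Real.log (q i / T + p i) - Real.log (q i))))
      atTop (𝓝 (w i * (p i * (Real.log (p i) - Real.log (q i))))) := by
    intro i
    rcases (hp i).eq_or_lt with h | h
    · simp [← h]
    · have h1 : Tendsto (fun T : ℝ => q i / T + p i) atTop (𝓝 (0 + p i)) :=
        (tendsto_const_nhds.div_atTop tendsto_id).add tendsto_const_nhds
      rw [zero_add] at h1
      exact (((h1.log h.ne').sub_const _).const_mul _).const_mul _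
  refine (tendsto_finsetSum Finset.univ fun i _ => key i).congr' ?_
  filter_upwards [eventually_gt_atTop 0] with T hT
  rw [Finset.sum_mul, ← Finset.sum_sub_distrib, ← Finset.sum_sub_distrib]
  refine Finset.sum_congr rfl fun i _ => ?_
  have h1 : q i + T * p i = T * (q i / T + p i) := by field_simp
  have h2 : q i / T + p i ≠ 0 := by
    have := div_pos (hq i) hT; have := hp i; positivity
  rw [h1, Real.log_mul hT.ne' h2]
  ring

lemma scalar_mono {m : Type*} [Fintype m] (w p q w' p' q' : m → ℝ)
    (hp : ∀ i, 0 ≤ p i) (hq : ∀ i, 0 < q i) (hp' : ∀ i, 0 ≤ p' i) (hq' : ∀ i, 0 < q' i)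
    (h : ∀ t : ℝ, 0 ≤ t → ∑ i, w' i * (p' i ^ 2 / (q' i + t * p' i))
      ≤ ∑ i, w i * (p i ^ 2 / (q i + t * p i)))
    (hm : ∑ i, w' i * p' i = ∑ i, w i * p i) :
    ∑ i, w' i * (p' i * (Real.log (p' i) - Real.log (q' i)))
      ≤ ∑ i, w i * (p i * (Real.log (p i) - Real.log (q i))) := by
  have hd : ∀ (w p q : m → ℝ), (∀ i, 0 ≤ p i) → (∀ i, 0 < q i) → ∀ T : ℝ, 0 ≤ T →
      HasDerivAt (fun T : ℝ => ∑ i, w i * (p i * Real.log (q i + T * p i)))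
        (∑ i, w i * (p i ^ 2 / (q i + T * p i))) T := by
    intro w p q hp hq T hT
    refine HasDerivAt.fun_sum fun i _ => ?_
    have hne : q i + T * p i ≠ 0 := by
      have := hq i; have := mul_nonneg hT (hp i); positivity
    have h1 : HasDerivAt (fun T : ℝ => q i + T * p i) (p i) T := by
      simpa using ((hasDerivAt_id T).mul_const (p i)).const_add (q i)
    refine (((h1.log hne).const_mul (p i)).const_mul (w i)).congr_deriv ?_
    ring
  have mono : MonotoneOn (fun T : ℝ => ∑ i, w i * (p i * Real.log (q i + T * p i)) -
      ∑ i, w' i * (p' i * Real.log (q' i + T * p' i))) (Set.Ici 0) := by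
    have hd2 := fun T hT => (hd w p q hp hq T hT).sub (hd w' p' q' hp' hq' T hT)
    refine monotoneOn_of_deriv_nonneg (convex_Ici 0) ?_ ?_ ?_
    · intro T hT
      exact (hd2 T hT).continuousAt.continuousWithinAt
    · intro T hT
      rw [interior_Ici] at hT
      exact (hd2 T (le_of_lt hT)).differentiableAt.differentiableWithinAt
    · intro T hT
      rw [interior_Ici] at hT
      have := (hd2 T (le_of_lt hT)).deriv
      have h3 := h T (le_of_lt hT)
      refine le_trans (sub_nonneg.2 h3) (le_of_eq this.symm)
  refine le_of_tendsto_of_tendsto (scalar_limit w' p' q' hp' hq') (scalar_limit w p q hp hq) ?_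
  filter_upwards [eventually_ge_atTop 0] with T hT
  have := mono (Set.mem_Ici.2 le_rfl) (Set.mem_Ici.2 hT) hT
  simp only [zero_mul, add_zero] at this
  rw [hm]
  linarith
end scalar
section deph2
variable {n : Type*} [Fintype n] [DecidableEq n]

/-- `Tr ρ log σ`-type quantity -/
def crs (V : Matrix n n ℂ) (q : n → ℝ) (ρ : Matrix n n ℂ) : ℝ :=
  ((ρ * (V * Matrix.diagonal (fun i => (q i : ℂ)) * Vᴴ)).trace).re

lemma Dcp.crs_eq {U V ρ : Matrix n n ℂ} {p : n → ℝ} (hρ : Dcp U p ρ) (q : n → ℝ) :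
    crs V q ρ = ∑ i, ∑ j, ovl V U j i * (p i * q j) := by
  set C := Vᴴ * U with hC
  have h1 : (ρ * (V * Matrix.diagonal (fun i => (q i : ℂ)) * Vᴴ)).trace =
      (diagonal (fun i => (p i : ℂ)) * (Cᴴ * (diagonal (fun i => (q i : ℂ)) * C))).trace := by
    rw [hρ.eq, hC, Matrix.conjTranspose_mul, Matrix.conjTranspose_conjTranspose]
    simp only [Matrix.mul_assoc]
    rw [Matrix.trace_mul_comm]
    simp only [Matrix.mul_assoc]
  rw [crs, h1]
  simp only [Matrix.trace, Matrix.diag_apply, Matrix.diagonal_mul, Complex.re_sum]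
  refine Finset.sum_congr rfl fun i _ => ?_
  rw [Matrix.mul_apply, Complex.re_ofReal_mul, Complex.re_sum, Finset.mul_sum]
  refine Finset.sum_congr rfl fun j _ => ?_
  rw [Matrix.conjTranspose_apply, Matrix.diagonal_mul]
  have : (star (C j i) * C j i).re = ovl V U j i := by
    rw [ovl, ← hC, Complex.star_def, ← Complex.normSq_eq_conj_mul_self, Complex.ofReal_re]
  rw [mul_left_comm, Complex.re_ofReal_mul, this]
  ring

lemma ovl_sum {U V : Matrix n n ℂ} (hU : Uᴴ * U = 1) (hV : V * Vᴴ = 1) (i : n) :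
    ∑ j, ovl V U j i = 1 := by
  have h : (Vᴴ * U)ᴴ * (Vᴴ * U) = 1 := by
    rw [Matrix.conjTranspose_mul, Matrix.conjTranspose_conjTranspose, Matrix.mul_assoc,
      ← Matrix.mul_assoc V, hV, Matrix.one_mul, hU]
  unfold ovl
  generalize Vᴴ * U = C at *
  have h2 := congrArg (fun X => (X i i).re) h
  simp only [Matrix.mul_apply, Matrix.one_apply_eq, Complex.one_re, Complex.re_sum,
    Matrix.conjTranspose_apply] at h2
  rw [← h2]
  refine Finset.sum_congr rfl fun j _ => ?_
  rw [Complex.star_def, ← Complex.normSq_eq_conj_mul_self, Complex.ofReal_re]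

lemma Dcp.trace_re {U ρ : Matrix n n ℂ} {p : n → ℝ} (h : Dcp U p ρ) : ρ.trace.re = ∑ i, p i := by
  rw [h.eq, Matrix.trace_mul_comm, ← Matrix.mul_assoc, h.left, Matrix.one_mul]
  simp [Matrix.trace]

lemma relent_eq {U V ρ : Matrix n n ℂ} {p q : n → ℝ} (hρ : Dcp U p ρ) (hV : V * Vᴴ = 1) :
    ∑ x : n × n, ovl V U x.2 x.1 * (p x.1 * (Real.log (p x.1) - Real.log (q x.2)))
      = ∑ i, p i * Real.log (p i) - crs V (fun j => Real.log (q j)) ρ := by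
  rw [hρ.crs_eq, ← Finset.sum_sub_distrib, Fintype.sum_prod_type]
  refine Finset.sum_congr rfl fun i _ => ?_
  simp only [mul_sub, Finset.sum_sub_distrib]
  rw [← Finset.sum_mul, ovl_sum hρ.left hV, one_mul]
end deph2

section deph3
variable {a b : Type*} [Fintype a] [DecidableEq a] [Fintype b] [DecidableEq b]

theorem relent_mono {U V U' V' ρ σ : Matrix (a × b) (a × b) ℂ} {p q p' q' : a × b → ℝ}
    (hρ : Dcp U p ρ) (hσ : Dcp V q σ)
    (hρ' : Dcp U' p' (dephaseA ρ)) (hσ' : Dcp V' q' (dephaseA σ))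
    (hp : ∀ i, 0 ≤ p i) (hq : ∀ i, 0 < q i) (hp' : ∀ i, 0 ≤ p' i) (hq' : ∀ i, 0 < q' i) :
    ∑ i, p' i * Real.log (p' i) - crs V' (fun j => Real.log (q' j)) (dephaseA ρ)
      ≤ ∑ i, p i * Real.log (p i) - crs V (fun j => Real.log (q j)) ρ := by
  rw [← relent_eq hρ hσ.right, ← relent_eq hρ' hσ'.right]
  refine scalar_mono (m := (a × b) × (a × b)) (fun x => ovl V U x.2 x.1) (fun x => p x.1)
    (fun x => q x.2) (fun x => ovl V' U' x.2 x.1) (fun x => p' x.1) (fun x => q' x.2)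
    (fun _ => hp _) (fun _ => hq _) (fun _ => hp' _) (fun _ => hq' _) ?_ ?_
  · intro t ht
    have := Fq_mono hρ hσ hρ' hσ' hp hq hp' hq' ht
    simpa only [Fq, Fintype.sum_prod_type (γ := ℝ) (α₁ := a × b) (α₂ := a × b)] using this
  · rw [Fintype.sum_prod_type (α₁ := a × b) (α₂ := a × b),
      Fintype.sum_prod_type (α₁ := a × b) (α₂ := a × b)]
    simp only [← Finset.sum_mul, ovl_sum hρ.left hσ.right, ovl_sum hρ'.left hσ'.right, one_mul]
    rw [← hρ.trace_re, ← hρ'.trace_re, dephaseA_trace]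
end deph3
section fin1
variable {n : Type*} [Fintype n] [DecidableEq n]

lemma dcp_eig {M : Matrix n n ℂ} (h : M.IsHermitian) :
    Dcp (h.eigenvectorUnitary : Matrix n n ℂ) h.eigenvalues M := by
  refine ⟨?_, ?_, ?_⟩
  · rw [← Matrix.star_eq_conjTranspose]; simp
  · rw [← Matrix.star_eq_conjTranspose]; simp
  · have := h.spectral_theorem
    rw [Unitary.conjStarAlgAut_apply] at this
    exact this

lemma vN_eq {M : Matrix n n ℂ} (h : M.IsHermitian) :
    vN M = - (∑ i, h.eigenvalues i * Real.log (h.eigenvalues i)) / Real.log 2 := by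
  rw [vN, dif_pos h, neg_div, Finset.sum_div, ← Finset.sum_neg_distrib]
  refine Finset.sum_congr rfl fun i _ => ?_
  rw [Real.logb, mul_div_assoc]

lemma vN_conj {M K : Matrix n n ℂ} (h : M.IsHermitian) (hK : Kᴴ * K = 1) :
    vN (K * M * Kᴴ) = vN M := by
  have h' : (K * M * Kᴴ).IsHermitian := Matrix.isHermitian_mul_mul_conjTranspose K h
  have : h'.eigenvalues = h.eigenvalues := by
    rw [Matrix.IsHermitian.eigenvalues_eq_eigenvalues_iff, Matrix.charpoly_mul_comm,
      ← Matrix.mul_assoc, hK, Matrix.one_mul]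
  rw [vN_eq h', vN_eq h, this]

lemma Dcp.crs_self {V σ : Matrix n n ℂ} {q : n → ℝ} (h : Dcp V q σ) (f : n → ℝ) :
    crs V f σ = ∑ i, q i * f i := by
  rw [crs, h.eq]
  have : V * diagonal (fun i => (q i : ℂ)) * Vᴴ * (V * diagonal (fun i => (f i : ℂ)) * Vᴴ)
      = V * (diagonal (fun i => (q i : ℂ)) * diagonal (fun i => (f i : ℂ)) * Vᴴ) := by
    calc _ = V * (diagonal (fun i => (q i : ℂ)) * (Vᴴ * V) * diagonal (fun i => (f i : ℂ)) * Vᴴ) := by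
          simp only [Matrix.mul_assoc]
      _ = _ := by rw [h.left, Matrix.mul_one]
  rw [this, Matrix.trace_mul_comm, Matrix.mul_assoc, h.left, Matrix.mul_one,
    Matrix.diagonal_mul_diagonal]
  simp [Matrix.trace]

lemma Dcp.add_eps {V σ : Matrix n n ℂ} {q : n → ℝ} (h : Dcp V q σ) (ε : ℝ) :
    Dcp V (fun i => q i + ε) (σ + (ε : ℂ) • 1) := by
  refine ⟨h.left, h.right, ?_⟩
  have : diagonal (fun i => ((q i + ε : ℝ) : ℂ)) = diagonal (fun i => (q i : ℂ)) + (ε : ℂ) • 1 := by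
    rw [← Matrix.diagonal_one, ← Matrix.diagonal_smul, Matrix.diagonal_add]
    congr 1; ext i; simp
  rw [this, Matrix.mul_add, Matrix.add_mul, ← h.eq]
  simp [h.right]

lemma Dcp.conj {V σ K : Matrix n n ℂ} {q : n → ℝ} (h : Dcp V q σ) (hK : Kᴴ * K = 1)
    (hK' : K * Kᴴ = 1) : Dcp (Kᴴ * V) q (Kᴴ * σ * K) := by
  refine ⟨?_, ?_, ?_⟩
  · rw [Matrix.conjTranspose_mul, Matrix.conjTranspose_conjTranspose, Matrix.mul_assoc,
      ← Matrix.mul_assoc K, hK', Matrix.one_mul, h.left]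
  · rw [Matrix.conjTranspose_mul, Matrix.conjTranspose_conjTranspose, Matrix.mul_assoc,
      ← Matrix.mul_assoc V, h.right, Matrix.one_mul, hK]
  · rw [Matrix.conjTranspose_mul, Matrix.conjTranspose_conjTranspose]
    conv_lhs => rw [h.eq]
    simp only [Matrix.mul_assoc]

lemma crs_conj {V ρ K : Matrix n n ℂ} (f : n → ℝ) (hK' : K * Kᴴ = 1) :
    crs (Kᴴ * V) f (Kᴴ * ρ * K) = crs V f ρ := by
  rw [crs, crs, Matrix.conjTranspose_mul, Matrix.conjTranspose_conjTranspose]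
  congr 1
  calc _ = (Kᴴ * (ρ * (K * Kᴴ) * (V * diagonal (fun i => (f i : ℂ)) * Vᴴ) * K)).trace := by
        simp only [Matrix.mul_assoc]
    _ = (ρ * (K * Kᴴ) * (V * diagonal (fun i => (f i : ℂ)) * Vᴴ) * (K * Kᴴ)).trace := by
        rw [Matrix.trace_mul_comm]; simp only [Matrix.mul_assoc]
    _ = _ := by rw [hK', Matrix.mul_one, Matrix.mul_one]
end fin1

section fin2
variable {d : ℕ} {b : Type*} [Fintype b] [DecidableEq b]

lemma dephaseA_psd {M : Matrix (Fin d × b) (Fin d × b) ℂ} (h : M.PosSemidef) :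
    (dephaseA M).PosSemidef := by
  have : dephaseA M = ∑ k : Fin d, (diagonal (fun p : Fin d × b => if p.1 = k then (1 : ℂ) else 0))
      * M * (diagonal (fun p : Fin d × b => if p.1 = k then (1 : ℂ) else 0))ᴴ := by
    ext p q
    rw [Matrix.sum_apply]
    simp only [Matrix.diagonal_conjTranspose, Matrix.mul_diagonal, Matrix.diagonal_mul, dephaseA,
      Matrix.of_apply, Pi.star_apply]
    rw [Finset.sum_eq_single p.1]
    · by_cases h : p.1 = q.1
      · simp [h]
      · simp [h, Ne.symm h]
    · intro k _ hk
      simp [hk.symm]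
    · simp
  rw [this]
  exact Matrix.posSemidef_sum _ fun k _ => h.mul_mul_conjTranspose_same _

lemma dephaseA_of_commute {G : Matrix (Fin d × b) (Fin d × b) ℂ}
    (h : Commute (diagonal (fun p : Fin d × b => ((p.1 : ℕ) : ℂ))) G) : dephaseA G = G := by
  ext p q
  simp only [dephaseA, Matrix.of_apply]
  split_ifs with hpq
  · rfl
  · have h1 := congrFun (congrFun h.eq p) q
    rw [Matrix.diagonal_mul, Matrix.mul_diagonal] at h1
    have h2 : (((p.1 : ℕ) : ℂ) - ((q.1 : ℕ) : ℂ)) * G p q = 0 := by linear_combination h1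
    rcases mul_eq_zero.1 h2 with h3 | h3
    · exfalso
      apply hpq
      apply Fin.ext
      exact_mod_cast sub_eq_zero.1 h3
    · exact h3.symm

lemma commute_dephaseA (M : Matrix (Fin d × b) (Fin d × b) ℂ) :
    Commute (dephaseA M) (diagonal (fun p : Fin d × b => ((p.1 : ℕ) : ℂ))) := by
  ext p q
  rw [Matrix.diagonal_mul, Matrix.mul_diagonal]
  simp only [dephaseA, Matrix.of_apply]
  split_ifs with h
  · rw [h, mul_comm]
  · simp

lemma dephaseA_fun {M : Matrix (Fin d × b) (Fin d × b) ℂ} (h : (dephaseA M).IsHermitian)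
    (f : ℝ → ℝ) :
    dephaseA ((h.eigenvectorUnitary : Matrix (Fin d × b) (Fin d × b) ℂ) *
      diagonal (fun i => (f (h.eigenvalues i) : ℂ)) * (h.eigenvectorUnitary : Matrix _ _ ℂ)ᴴ)
    = (h.eigenvectorUnitary : Matrix (Fin d × b) (Fin d × b) ℂ) *
      diagonal (fun i => (f (h.eigenvalues i) : ℂ)) * (h.eigenvectorUnitary : Matrix _ _ ℂ)ᴴ := by
  apply dephaseA_of_commute
  have h1 := (commute_dephaseA M).cfc_real f
  rw [h.cfc_eq, Matrix.IsHermitian.cfc, Unitary.conjStarAlgAut_apply] at h1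
  exact h1.symm

lemma crs_dephase {M : Matrix (Fin d × b) (Fin d × b) ℂ} (h : (dephaseA M).IsHermitian)
    (f : ℝ → ℝ) :
    crs (h.eigenvectorUnitary : Matrix _ _ ℂ) (fun i => f (h.eigenvalues i)) M
      = ∑ i, h.eigenvalues i * f (h.eigenvalues i) := by
  rw [← (dcp_eig h).crs_self, crs, crs, dephaseA_trace_mul, dephaseA_fun h f]

lemma fourier_entry (j k : Fin d) :
    star (fourierMat d k j) * fourierMat d k j = (d : ℂ)⁻¹ := by
  have hw : ‖qomega d‖ = 1 := by
    rw [qomega, Complex.norm_exp]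
    simp
  have : star (fourierMat d k j) * fourierMat d k j = ((‖fourierMat d k j‖ ^ 2 : ℝ) : ℂ) := by
    rw [Complex.star_def, ← Complex.normSq_eq_conj_mul_self, Complex.normSq_eq_norm_sq]
  rw [this, fourierMat, Matrix.of_apply, norm_div, norm_pow, hw, one_pow, Complex.norm_real,
    Real.norm_of_nonneg (Real.sqrt_nonneg _), div_pow, Real.sq_sqrt (Nat.cast_nonneg d)]
  simp

lemma fourier_unitary [NeZero d] : (fourierMat d)ᴴ * fourierMat d = 1 := by
  have hprim : IsPrimitiveRoot (qomega d) d := Complex.isPrimitiveRoot_exp d (NeZero.ne d)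
  have hd : (d : ℂ) ≠ 0 := by exact_mod_cast NeZero.ne d
  have hw : ‖qomega d‖ = 1 := by
    rw [qomega, Complex.norm_exp]
    simp
  have hw0 : qomega d ≠ 0 := by intro h; simp [h] at hw
  have hcw : star (qomega d) = (qomega d)⁻¹ := by
    rw [Complex.star_def, Complex.inv_def, Complex.normSq_eq_norm_sq, hw]; simp
  ext i j
  rw [Matrix.mul_apply]
  simp only [Matrix.conjTranspose_apply]
  by_cases hij : i = j
  · subst hij
    simp only [fourier_entry]
    simp [hd]
  · rw [Matrix.one_apply_ne hij]
    set z : ℂ := (qomega d)⁻¹ ^ (i : ℕ) * qomega d ^ (j : ℕ) with hz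
    have hs : ((Real.sqrt d : ℝ) : ℂ) * ((Real.sqrt d : ℝ) : ℂ) = d := by
      rw [← Complex.ofReal_mul, Real.mul_self_sqrt (Nat.cast_nonneg d)]; simp
    have hterm : ∀ k : Fin d, star (fourierMat d k i) * fourierMat d k j = z ^ (k : ℕ) / d := by
      intro k
      simp only [fourierMat, Matrix.of_apply]
      rw [star_div₀, star_pow, hcw, Complex.star_def, Complex.conj_ofReal, div_mul_div_comm, hs, hz,
        mul_pow, ← pow_mul, ← pow_mul]
    simp only [hterm]
    rw [← Finset.sum_div, Fin.sum_univ_eq_sum_range (fun k => z ^ k)]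
    have hz1 : z ≠ 1 := by
      intro h
      rw [hz, inv_pow, inv_mul_eq_one₀ (pow_ne_zero _ hw0)] at h
      exact hij (Fin.ext (hprim.pow_inj i.2 j.2 h))
    have hzd : z ^ d = 1 := by
      rw [hz, mul_pow, ← pow_mul, ← pow_mul, mul_comm (i : ℕ), mul_comm (j : ℕ), pow_mul, pow_mul,
        inv_pow, hprim.pow_eq_one]
      simp
    rw [geom_sum_eq hz1, hzd]
    simp

lemma K_conj_apply (F : Matrix (Fin d) (Fin d) ℂ) (M : Matrix (Fin d × b) (Fin d × b) ℂ)
    (j j' : Fin d) (y y' : b) :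
    ((F ⊗ₖ (1 : Matrix b b ℂ))ᴴ * M * (F ⊗ₖ (1 : Matrix b b ℂ))) (j, y) (j', y')
      = ∑ l, ∑ k, star (F k j) * M (k, y) (l, y') * F l j' := by
  simp only [Matrix.mul_apply, Fintype.sum_prod_type, Matrix.conjTranspose_apply,
    Matrix.kroneckerMap_apply, Matrix.one_apply]
  refine Finset.sum_congr rfl fun l _ => ?_
  simp [Finset.sum_mul, apply_ite (starRingEnd ℂ), ite_mul]

lemma omega_eq (M : Matrix (Fin d × b) (Fin d × b) ℂ) :
    dephaseA ((fourierMat d ⊗ₖ (1 : Matrix b b ℂ))ᴴ * dephaseA M *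
      (fourierMat d ⊗ₖ (1 : Matrix b b ℂ))) =
    (d : ℂ)⁻¹ • ((1 : Matrix (Fin d) (Fin d) ℂ) ⊗ₖ r2B M) := by
  ext ⟨j, y⟩ ⟨j', y'⟩
  rw [Matrix.smul_apply, Matrix.kroneckerMap_apply, dephaseA, Matrix.of_apply]
  by_cases h : j = j'
  · subst h
    rw [if_pos rfl, K_conj_apply, Matrix.one_apply_eq, one_mul, r2B, Matrix.of_apply, smul_eq_mul,
      Finset.mul_sum]
    refine Finset.sum_congr rfl fun l _ => ?_
    rw [Finset.sum_eq_single l]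
    · rw [← fourier_entry j l]
      simp [dephaseA]; ring
    · intro k _ hk
      simp [dephaseA, hk]
    · simp
  · simp [h]

lemma trace_r2B (M : Matrix (Fin d × b) (Fin d × b) ℂ) (G : Matrix b b ℂ) :
    (M * ((1 : Matrix (Fin d) (Fin d) ℂ) ⊗ₖ G)).trace = (r2B M * G).trace := by
  simp only [Matrix.trace, Matrix.diag_apply, Matrix.mul_apply, Fintype.sum_prod_type, r2B,
    Matrix.of_apply, Matrix.kroneckerMap_apply, Matrix.one_apply]
  simp only [ite_mul, one_mul, zero_mul, mul_ite, mul_zero, Finset.sum_mul]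
  rw [Finset.sum_comm]
  refine Finset.sum_congr rfl fun y _ => ?_
  rw [Finset.sum_comm' (t' := Finset.univ) (s' := fun _ => Finset.univ) (by simp)]
  conv_rhs => rw [Finset.sum_comm]
  rw [Finset.sum_comm]
  refine Finset.sum_congr rfl fun x _ => ?_
  rw [Finset.sum_comm]
  refine Finset.sum_congr rfl fun z _ => ?_
  simp

lemma r2B_psd_s11 {M : Matrix (Fin d × b) (Fin d × b) ℂ} (h : M.PosSemidef) :
    (r2B M).PosSemidef := by
  have : r2B M = ∑ k : Fin d, M.submatrix (fun y => (k, y)) (fun y => (k, y)) := by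
    ext y y'
    rw [Matrix.sum_apply]; rfl
  rw [this]
  exact Matrix.posSemidef_sum _ fun k _ => h.submatrix _

lemma r2B_trace (M : Matrix (Fin d × b) (Fin d × b) ℂ) : (r2B M).trace = M.trace := by
  have := trace_r2B M 1
  simpa using this.symm

lemma kron_diag (V : Matrix b b ℂ) (g : b → ℝ) :
    ((1 : Matrix (Fin d) (Fin d) ℂ) ⊗ₖ V) * diagonal (fun x : Fin d × b => (g x.2 : ℂ)) *
      ((1 : Matrix (Fin d) (Fin d) ℂ) ⊗ₖ V)ᴴ
    = (1 : Matrix (Fin d) (Fin d) ℂ) ⊗ₖ (V * diagonal (fun y => (g y : ℂ)) * Vᴴ) := by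
  have h : diagonal (fun x : Fin d × b => (g x.2 : ℂ)) =
      (1 : Matrix (Fin d) (Fin d) ℂ) ⊗ₖ diagonal (fun y => (g y : ℂ)) := by
    rw [← Matrix.diagonal_one, Matrix.diagonal_kronecker_diagonal]; simp
  rw [h, Matrix.conjTranspose_kronecker, ← Matrix.mul_kronecker_mul, ← Matrix.mul_kronecker_mul]
  simp

lemma Dcp.kron {V σ : Matrix b b ℂ} {q : b → ℝ} (h : Dcp V q σ) :
    Dcp ((1 : Matrix (Fin d) (Fin d) ℂ) ⊗ₖ V) (fun x => q x.2 / d)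
      ((d : ℂ)⁻¹ • ((1 : Matrix (Fin d) (Fin d) ℂ) ⊗ₖ σ)) := by
  refine ⟨?_, ?_, ?_⟩
  · rw [Matrix.conjTranspose_kronecker, ← Matrix.mul_kronecker_mul, h.left]; simp
  · rw [Matrix.conjTranspose_kronecker, ← Matrix.mul_kronecker_mul, h.right]; simp
  · rw [kron_diag V (fun y => q y / d), ← Matrix.kronecker_smul]
    congr 1
    rw [h.eq, ← Matrix.smul_mul, ← Matrix.mul_smul, ← Matrix.diagonal_smul]
    congr 3
    ext i
    simp [div_eq_inv_mul]

lemma dephaseA_one_kron (G : Matrix b b ℂ) :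
    dephaseA ((1 : Matrix (Fin d) (Fin d) ℂ) ⊗ₖ G) = (1 : Matrix (Fin d) (Fin d) ℂ) ⊗ₖ G := by
  ext p q
  simp only [dephaseA, Matrix.of_apply, Matrix.kroneckerMap_apply]
  split_ifs with h
  · rfl
  · simp [Matrix.one_apply_ne h]

lemma crs_tau [NeZero d] (M : Matrix (Fin d × b) (Fin d × b) ℂ) (V : Matrix b b ℂ) (g : b → ℝ) :
    crs ((1 : Matrix (Fin d) (Fin d) ℂ) ⊗ₖ V) (fun x => g x.2)
      (dephaseA ((fourierMat d ⊗ₖ (1 : Matrix b b ℂ))ᴴ * M * (fourierMat d ⊗ₖ (1 : Matrix b b ℂ))))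
      = crs V g (r2B M) := by
  have hF : fourierMat d * (fourierMat d)ᴴ = 1 := mul_eq_one_comm.1 fourier_unitary
  rw [crs, crs, kron_diag, dephaseA_trace_mul, dephaseA_one_kron, ← trace_r2B, Matrix.mul_assoc,
    Matrix.mul_assoc, Matrix.trace_mul_comm, Matrix.mul_assoc, Matrix.conjTranspose_kronecker,
    ← Matrix.mul_kronecker_mul, ← Matrix.mul_kronecker_mul]
  simp [hF]

end fin2

/-- for any bipartite state ρ^{AB} with dim A = d,
S(Z^A|B)_ρ + S(X^A|B)_ρ ≥ log₂ d + S(A|B)_ρ. -/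
theorem cond_entropy_uncertainty (d : ℕ) [NeZero d] {b : Type*} [Fintype b] [DecidableEq b]
    (ρ : Matrix (Fin d × b) (Fin d × b) ℂ) (hρ : IsDensity ρ) :
    (vN (dephaseA ρ) - vN (r2B ρ)) + (vN (dephaseXA d ρ) - vN (r2B ρ))
      ≥ Real.logb 2 d + (vN ρ - vN (r2B ρ)) := by
  have hd : (0 : ℝ) < d := by exact_mod_cast Nat.pos_of_ne_zero (NeZero.ne d)
  obtain ⟨hP, htr⟩ := hρ
  set K := fourierMat d ⊗ₖ (1 : Matrix b b ℂ) with hKdef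
  have hF : fourierMat d * (fourierMat d)ᴴ = 1 := mul_eq_one_comm.1 fourier_unitary
  have hK : Kᴴ * K = 1 := by
    rw [hKdef, Matrix.conjTranspose_kronecker, ← Matrix.mul_kronecker_mul, fourier_unitary]; simp
  have hK' : K * Kᴴ = 1 := mul_eq_one_comm.1 hK
  have hσ := dephaseA_psd hP
  have hB := r2B_psd_s11 hP
  have hτ : (dephaseA (Kᴴ * ρ * K)).PosSemidef :=
    dephaseA_psd (hP.conjTranspose_mul_mul_same K)
  have hX : vN (dephaseXA d ρ) = vN (dephaseA (Kᴴ * ρ * K)) := vN_conj hτ.1 hK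
  have key : ∀ ε : ℝ, 0 < ε →
      ∑ i, hτ.1.eigenvalues i * Real.log (hτ.1.eigenvalues i)
        - ∑ j, hB.1.eigenvalues j * Real.log (hB.1.eigenvalues j / d + ε)
      ≤ ∑ i, hP.1.eigenvalues i * Real.log (hP.1.eigenvalues i)
        - ∑ i, hσ.1.eigenvalues i * Real.log (hσ.1.eigenvalues i + ε) := by
    intro ε hε
    have hom : dephaseA (Kᴴ * (dephaseA ρ + (ε : ℂ) • 1) * K) =
        (d : ℂ)⁻¹ • ((1 : Matrix (Fin d) (Fin d) ℂ) ⊗ₖ r2B ρ) + (ε : ℂ) • 1 := by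
      rw [Matrix.mul_add, Matrix.add_mul, Matrix.mul_smul, Matrix.smul_mul, Matrix.mul_one, hK,
        dephaseA_add, dephaseA_smul, dephaseA_one, omega_eq]
    have D1 := (dcp_eig hP.1).conj hK hK'
    have D2 := ((dcp_eig hσ.1).add_eps ε).conj hK hK'
    have D3 := dcp_eig hτ.1
    have D4 := ((dcp_eig hB.1).kron (d := d)).add_eps ε
    rw [← hom] at D4
    have := relent_mono D1 D2 D3 D4 (fun i => hP.eigenvalues_nonneg i)
      (fun i => by have := hσ.eigenvalues_nonneg i; positivity)
      (fun i => hτ.eigenvalues_nonneg i)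
      (fun i => by have := hB.eigenvalues_nonneg i.2; positivity)
    rw [crs_conj _ hK', crs_dephase hσ.1 (fun x => Real.log (x + ε)),
      crs_tau ρ _ (fun y => Real.log (hB.1.eigenvalues y / d + ε)), (dcp_eig hB.1).crs_self] at this
    exact this
  have lim : ∀ x c : ℝ, 0 < c → Filter.Tendsto (fun ε : ℝ => x * Real.log (x / c + ε))
      (nhdsWithin 0 (Set.Ioi 0)) (nhds (x * Real.log (x / c))) := by
    intro x c hc
    by_cases hx : x = 0
    · simp [hx]
    · have h1 : Filter.Tendsto (fun ε : ℝ => x / c + ε) (nhdsWithin 0 (Set.Ioi 0))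
          (nhds (x / c + 0)) :=
        (tendsto_const_nhds.add Filter.tendsto_id).mono_left nhdsWithin_le_nhds
      rw [add_zero] at h1
      exact (h1.log (div_ne_zero hx hc.ne')).const_mul _
  have key2 : ∑ i, hτ.1.eigenvalues i * Real.log (hτ.1.eigenvalues i)
        - ∑ j, hB.1.eigenvalues j * Real.log (hB.1.eigenvalues j / d)
      ≤ ∑ i, hP.1.eigenvalues i * Real.log (hP.1.eigenvalues i)
        - ∑ i, hσ.1.eigenvalues i * Real.log (hσ.1.eigenvalues i) := by
    refine le_of_tendsto_of_tendsto (b := nhdsWithin (0 : ℝ) (Set.Ioi 0))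
      (tendsto_const_nhds.sub (tendsto_finsetSum _ fun j _ => lim (hB.1.eigenvalues j) d hd))
      (tendsto_const_nhds.sub (tendsto_finsetSum _ fun j _ => by
        simpa using lim (hσ.1.eigenvalues j) 1 one_pos)) ?_
    filter_upwards [self_mem_nhdsWithin] with ε hε
    exact key ε hε
  have hsum : ∑ j, hB.1.eigenvalues j = 1 := by
    rw [← (dcp_eig hB.1).trace_re, r2B_trace, htr, Complex.one_re]
  have hlog : ∑ j, hB.1.eigenvalues j * Real.log (hB.1.eigenvalues j / d)
      = ∑ j, hB.1.eigenvalues j * Real.log (hB.1.eigenvalues j) - Real.log d := by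
    rw [← one_mul (Real.log d), ← hsum, Finset.sum_mul, ← Finset.sum_sub_distrib]
    refine Finset.sum_congr rfl fun j _ => ?_
    by_cases hx : hB.1.eigenvalues j = 0
    · simp [hx]
    · rw [Real.log_div hx hd.ne']; ring
  rw [hlog] at key2
  have h2 : 0 < Real.log 2 := Real.log_pos one_lt_two
  rw [hX, vN_eq hσ.1, vN_eq hτ.1, vN_eq hB.1, vN_eq hP.1, Real.logb]
  rw [ge_iff_le, ← sub_nonneg]
  have : 0 ≤ (∑ i, hP.1.eigenvalues i * Real.log (hP.1.eigenvalues i)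
        - ∑ i, hσ.1.eigenvalues i * Real.log (hσ.1.eigenvalues i)
      - (∑ i, hτ.1.eigenvalues i * Real.log (hτ.1.eigenvalues i)
        - (∑ j, hB.1.eigenvalues j * Real.log (hB.1.eigenvalues j) - Real.log d))) / Real.log 2 :=
    div_nonneg (sub_nonneg.2 key2) h2.le
  refine this.trans (le_of_eq ?_)
  ring
end
end

section
/- Quantum Pinsker inequality: for density operators ρ, σ on a finite-dimensional Hilbert space, (Tr|ρ − σ|)² ≤ 4 S(ρ‖σ), where S is the relative entropy in base 2 (equivalently, ‖ρ−σ‖₁² ≤ (2 ln 2) S_nat with natural-log relative entropy, which implies the stated base-2 bound). -/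
open Matrix Kronecker ComplexOrder

noncomputable section

lemma qp_trace {n : Type*} [Fintype n] [DecidableEq n] (U W : Matrix n n ℂ) (a b : n → ℝ) :
    ((U * diagonal (fun i => (a i : ℂ)) * Uᴴ) * (W * diagonal (fun i => (b i : ℂ)) * Wᴴ)).trace
      = ((∑ i, ∑ j, a i * b j * Complex.normSq ((Uᴴ * W) i j) : ℝ) : ℂ) := by
  have h1 : ((U * diagonal (fun i => (a i : ℂ)) * Uᴴ) *
      (W * diagonal (fun i => (b i : ℂ)) * Wᴴ)).trace
      = ((diagonal (fun i => (a i : ℂ)) * (Uᴴ * W)) *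
        (diagonal (fun i => (b i : ℂ)) * (Uᴴ * W)ᴴ)).trace := by
    rw [conjTranspose_mul, conjTranspose_conjTranspose]
    simp only [Matrix.mul_assoc]
    rw [Matrix.trace_mul_comm]
    simp only [Matrix.mul_assoc]
  rw [h1]
  simp only [Matrix.trace, Matrix.diag, Matrix.mul_apply (M := _ * (Uᴴ * W)), Matrix.diagonal_mul,
    conjTranspose_apply]
  push_cast
  refine Finset.sum_congr rfl fun i _ => Finset.sum_congr rfl fun j _ => ?_
  rw [Complex.normSq_eq_conj_mul_self]
  simp only [RCLike.star_def]
  ring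

lemma qp_scalar (p q : ℝ) (hp : 0 ≤ p) (hq : 0 ≤ q) (c : ℝ) (hc : 0 ≤ c)
    (h : q = 0 → p * c = 0) :
    2 * p * c - 2 * (√p * √q * c) ≤ p * (Real.log p - Real.log q) * c := by
  rcases hp.eq_or_lt with rfl | hp'
  · simp
  rcases hq.eq_or_lt with rfl | hq'
  · have := h rfl
    have hc0 : c = 0 := by
      rcases mul_eq_zero.1 this with h | h
      · exact absurd h hp'.ne'
      · exact h
    simp [hc0]
  have hs := Real.sqrt_pos.2 hp'
  have ht := Real.sqrt_pos.2 hq'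
  have h1 := Real.log_le_sub_one_of_pos (div_pos ht hs)
  rw [Real.log_div ht.ne' hs.ne', Real.log_sqrt hp, Real.log_sqrt hq] at h1
  have h2 : p * (√q / √p) = √p * √q := by
    have := Real.mul_self_sqrt hp
    field_simp
    nlinarith
  have h3 := mul_le_mul_of_nonneg_left h1 hp
  rw [mul_sub, mul_sub, h2] at h3
  nlinarith [mul_le_mul_of_nonneg_right h3 hc]

lemma qp_abs (a b : ℂ) : |Complex.normSq a - Complex.normSq b| ≤ ‖a - b‖ * ‖a + b‖ := by
  have : Complex.normSq a - Complex.normSq b = ((a - b) * star (a + b)).re := by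
    simp [Complex.normSq_apply]; ring
  rw [this]
  refine (Complex.abs_re_le_norm _).trans ?_
  rw [norm_mul, norm_star]

lemma qp_sum {n : Type*} [Fintype n] [DecidableEq n] (A B : Matrix n n ℂ) :
    (∑ k, |∑ j, (Complex.normSq (A k j) - Complex.normSq (B k j))|) ^ 2 ≤
    (((A * Aᴴ).trace).re + ((B * Bᴴ).trace).re) ^ 2 - (2 * ((A * Bᴴ).trace).re) ^ 2 := by
  have e1 : ∀ A B : Matrix n n ℂ, ((A * Bᴴ).trace).re = ∑ x : n × n, (A x.1 x.2 * star (B x.1 x.2)).re := by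
    intro A B
    simp [Matrix.trace, Matrix.mul_apply, Fintype.sum_prod_type]
  have h1 : (∑ k, |∑ j, (Complex.normSq (A k j) - Complex.normSq (B k j))|) ≤
      ∑ x : n × n, ‖A x.1 x.2 - B x.1 x.2‖ * ‖A x.1 x.2 + B x.1 x.2‖ := by
    rw [Fintype.sum_prod_type]
    refine Finset.sum_le_sum fun k _ => (Finset.abs_sum_le_sum_abs _ _).trans ?_
    exact Finset.sum_le_sum fun j _ => qp_abs _ _
  have h2 := Finset.sum_mul_sq_le_sq_mul_sq Finset.univ
    (fun x : n × n => ‖A x.1 x.2 - B x.1 x.2‖) (fun x : n × n => ‖A x.1 x.2 + B x.1 x.2‖)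
  have h0 : 0 ≤ (∑ k, |∑ j, (Complex.normSq (A k j) - Complex.normSq (B k j))|) :=
    Finset.sum_nonneg fun _ _ => abs_nonneg _
  refine (pow_le_pow_left₀ h0 h1 2).trans (h2.trans (le_of_eq ?_))
  have h3 : ∑ x : n × n, ‖A x.1 x.2 - B x.1 x.2‖ ^ 2 =
      ((A * Aᴴ).trace).re + ((B * Bᴴ).trace).re - 2 * ((A * Bᴴ).trace).re := by
    rw [e1, e1, e1, Finset.mul_sum, ← Finset.sum_add_distrib, ← Finset.sum_sub_distrib]
    refine Finset.sum_congr rfl fun x _ => ?_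
    rw [← Complex.normSq_eq_norm_sq]
    simp [Complex.normSq_apply]; ring
  have h4 : ∑ x : n × n, ‖A x.1 x.2 + B x.1 x.2‖ ^ 2 =
      ((A * Aᴴ).trace).re + ((B * Bᴴ).trace).re + 2 * ((A * Bᴴ).trace).re := by
    rw [e1, e1, e1, Finset.mul_sum, ← Finset.sum_add_distrib, ← Finset.sum_add_distrib]
    refine Finset.sum_congr rfl fun x _ => ?_
    rw [← Complex.normSq_eq_norm_sq]
    simp [Complex.normSq_apply]; ring
  rw [h3, h4]; ring

/-- quantum Pinsker inequality (Tr|ρ−σ|)² ≤ 4 S(ρ‖σ) (base-2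
relative entropy), under the support condition supp ρ ⊆ supp σ. -/
theorem quantum_pinsker {n : Type*} [Fintype n] [DecidableEq n]
    (ρ σ : Matrix n n ℂ) (hρ : IsDensity ρ) (hσ : IsDensity σ)
    (hsupp : ∀ v : n → ℂ, σ *ᵥ v = 0 → ρ *ᵥ v = 0) :
    (traceNorm (ρ - σ)) ^ 2 ≤ 4 * relEnt ρ σ := by
  obtain ⟨hρp, hρt⟩ := hρ
  obtain ⟨hσp, hσt⟩ := hσ
  have hρh := hρp.isHermitian
  have hσh := hσp.isHermitian
  have hM : (ρ - σ).IsHermitian := hρh.sub hσh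
  have hp0 := hρp.eigenvalues_nonneg
  have hq0 := hσp.eigenvalues_nonneg
  have hr : relEnt ρ σ = ((ρ * (mlog ρ - mlog σ)).trace).re := rfl
  have ht : traceNorm (ρ - σ) = ∑ i, |hM.eigenvalues i| := by simp [traceNorm, hM]
  have hspec : ∀ (M : Matrix n n ℂ) (h : M.IsHermitian), M =
      (h.eigenvectorUnitary : Matrix n n ℂ) * diagonal (fun i => (h.eigenvalues i : ℂ)) *
        (h.eigenvectorUnitary : Matrix n n ℂ)ᴴ := by
    intro M h
    have := h.spectral_theorem
    rw [Unitary.conjStarAlgAut_apply] at this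
    exact this
  have hU1 : ∀ (M : Matrix n n ℂ) (h : M.IsHermitian), (h.eigenvectorUnitary : Matrix n n ℂ)ᴴ *
      (h.eigenvectorUnitary : Matrix n n ℂ) = 1 := fun M h =>
    Unitary.coe_star_mul_self h.eigenvectorUnitary
  have hU2 : ∀ (M : Matrix n n ℂ) (h : M.IsHermitian), (h.eigenvectorUnitary : Matrix n n ℂ) *
      (h.eigenvectorUnitary : Matrix n n ℂ)ᴴ = 1 := fun M h =>
    Unitary.coe_mul_star_self h.eigenvectorUnitary
  have hlρ : mlog ρ = (hρh.eigenvectorUnitary : Matrix n n ℂ) *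
      diagonal (fun i => (Real.logb 2 (hρh.eigenvalues i) : ℂ)) *
        (hρh.eigenvectorUnitary : Matrix n n ℂ)ᴴ := by simp [mlog, hρh]
  have hlσ : mlog σ = (hσh.eigenvectorUnitary : Matrix n n ℂ) *
      diagonal (fun i => (Real.logb 2 (hσh.eigenvalues i) : ℂ)) *
        (hσh.eigenvectorUnitary : Matrix n n ℂ)ᴴ := by simp [mlog, hσh]
  have hsρ := hspec ρ hρh
  have hsσ := hspec σ hσh
  have hsM := hspec _ hM
  have hUU := hU1 ρ hρh
  have hUU' := hU2 ρ hρh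
  have hWW := hU1 σ hσh
  have hWW' := hU2 σ hσh
  have hXX := hU1 _ hM
  have hXX' := hU2 _ hM
  have hker : ∀ i j, hσh.eigenvalues j = 0 → hρh.eigenvalues i *
      Complex.normSq (((hρh.eigenvectorUnitary : Matrix n n ℂ)ᴴ *
        (hσh.eigenvectorUnitary : Matrix n n ℂ)) i j) = 0 := by
    intro i j hj
    have h1 : σ *ᵥ ((hσh.eigenvectorUnitary : Matrix n n ℂ) *ᵥ Pi.single j 1) = 0 := by
      have h2 : σ * (hσh.eigenvectorUnitary : Matrix n n ℂ) =
          (hσh.eigenvectorUnitary : Matrix n n ℂ) *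
            diagonal (fun i => (hσh.eigenvalues i : ℂ)) := by
        refine (congrArg (· * (hσh.eigenvectorUnitary : Matrix n n ℂ)) hsσ).trans ?_
        beta_reduce
        rw [Matrix.mul_assoc, hWW, Matrix.mul_one]
      rw [mulVec_mulVec, h2, ← mulVec_mulVec]
      have : diagonal (fun i => (hσh.eigenvalues i : ℂ)) *ᵥ Pi.single j 1 = 0 := by
        ext k
        by_cases hk : k = j
        · subst hk; simp [mulVec_diagonal, hj]
        · simp [mulVec_diagonal, hk]
      rw [this, mulVec_zero]
    have h3 := hsupp _ h1
    have h4 : (hρh.eigenvectorUnitary : Matrix n n ℂ)ᴴ * ρ =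
        diagonal (fun i => (hρh.eigenvalues i : ℂ)) * (hρh.eigenvectorUnitary : Matrix n n ℂ)ᴴ := by
      refine (congrArg ((hρh.eigenvectorUnitary : Matrix n n ℂ)ᴴ * ·) hsρ).trans ?_
      beta_reduce
      rw [← Matrix.mul_assoc, ← Matrix.mul_assoc, hUU, Matrix.one_mul]
    have h5 := congrArg (fun v => ((hρh.eigenvectorUnitary : Matrix n n ℂ)ᴴ *ᵥ v) i) h3
    simp only [mulVec_mulVec, mulVec_zero, Pi.zero_apply, ← Matrix.mul_assoc] at h5
    rw [h4, Matrix.mul_assoc, Matrix.mulVec_single_one, Matrix.col_apply, diagonal_mul] at h5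
    rcases mul_eq_zero.1 h5 with h | h
    · rw [Complex.ofReal_eq_zero.1 h, zero_mul]
    · rw [h, map_zero, mul_zero]
  set U : Matrix n n ℂ := (hρh.eigenvectorUnitary : Matrix n n ℂ) with hUdef
  set W : Matrix n n ℂ := (hσh.eigenvectorUnitary : Matrix n n ℂ) with hWdef
  set X : Matrix n n ℂ := (hM.eigenvectorUnitary : Matrix n n ℂ) with hXdef
  set p := hρh.eigenvalues with hpdef
  set q := hσh.eigenvalues with hqdef
  set l := hM.eigenvalues with hldef
  clear_value U W X p q l
  have hWone : W * diagonal (fun _ => ((1 : ℝ) : ℂ)) * Wᴴ = 1 := by simp [hWW']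
  have hUone : U * diagonal (fun _ => ((1 : ℝ) : ℂ)) * Uᴴ = 1 := by simp [hUU']
  have hdd : ∀ a b : n → ℝ, U * diagonal (fun i => (a i : ℂ)) * Uᴴ *
      (U * diagonal (fun i => (b i : ℂ)) * Uᴴ) =
      U * diagonal (fun i => ((a i * b i : ℝ) : ℂ)) * Uᴴ := by
    intro a b
    calc _ = U * diagonal (fun i => (a i : ℂ)) * (Uᴴ * U) * diagonal (fun i => (b i : ℂ)) * Uᴴ := by
          simp only [Matrix.mul_assoc]
      _ = _ := by
          rw [hUU, Matrix.mul_one, Matrix.mul_assoc U, diagonal_mul_diagonal]; simp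
  have hdd' : ∀ a b : n → ℝ, W * diagonal (fun i => (a i : ℂ)) * Wᴴ *
      (W * diagonal (fun i => (b i : ℂ)) * Wᴴ) =
      W * diagonal (fun i => ((a i * b i : ℝ) : ℂ)) * Wᴴ := by
    intro a b
    calc _ = W * diagonal (fun i => (a i : ℂ)) * (Wᴴ * W) * diagonal (fun i => (b i : ℂ)) * Wᴴ := by
          simp only [Matrix.mul_assoc]
      _ = _ := by
          rw [hWW, Matrix.mul_one, Matrix.mul_assoc W, diagonal_mul_diagonal]; simp
  set c : n → n → ℝ := fun i j => Complex.normSq ((Uᴴ * W) i j) with hc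
  have hc0 : ∀ i j, 0 ≤ c i j := fun i j => Complex.normSq_nonneg _
  -- traces
  have t1 : ∑ i, ∑ j, p i * c i j = 1 := by
    have h := qp_trace U W p (fun _ => 1)
    rw [hWone, ← hsρ, Matrix.mul_one, hρt] at h
    have h' := Complex.ofReal_injective (h.symm.trans Complex.ofReal_one.symm)
    simpa using h'
  have t2 : ∑ i, ∑ j, q j * c i j = 1 := by
    have h := qp_trace U W (fun _ => 1) q
    rw [hUone, ← hsσ, Matrix.one_mul, hσt] at h
    have h' := Complex.ofReal_injective (h.symm.trans Complex.ofReal_one.symm)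
    simpa using h'
  have t3 : relEnt ρ σ = ∑ i, ∑ j, p i * (Real.logb 2 (p i) - Real.logb 2 (q j)) * c i j := by
    have h := qp_trace U W (fun i => p i * Real.logb 2 (p i)) (fun _ => 1)
    rw [hWone, Matrix.mul_one, ← hdd, ← hsρ, ← hlρ] at h
    have h' := qp_trace U W p (fun j => Real.logb 2 (q j))
    rw [← hsρ, ← hlσ] at h'
    rw [hr, Matrix.mul_sub, trace_sub, h, h', ← Complex.ofReal_sub, Complex.ofReal_re,
      ← Finset.sum_sub_distrib]
    refine Finset.sum_congr rfl fun i _ => ?_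
    rw [← Finset.sum_sub_distrib]
    refine Finset.sum_congr rfl fun j _ => ?_
    ring
  set f : ℝ := ∑ i, ∑ j, √(p i) * √(q j) * c i j with hf
  have hf1 : f ≤ 1 := by
    have : f ≤ ∑ i, ∑ j, (p i * c i j + q j * c i j) / 2 := by
      refine Finset.sum_le_sum fun i _ => Finset.sum_le_sum fun j _ => ?_
      have := Real.sq_sqrt (hp0 i)
      have := Real.sq_sqrt (hq0 j)
      have : √(p i) * √(q j) ≤ (p i + q j) / 2 := by nlinarith [sq_nonneg (√(p i) - √(q j))]
      nlinarith [mul_le_mul_of_nonneg_right this (hc0 i j)]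
    simp only [← Finset.sum_div, Finset.sum_add_distrib, t1, t2] at this
    linarith
  have hS : (2 - 2 * f) ≤ relEnt ρ σ * Real.log 2 := by
    rw [t3, hf]
    have hl2 : Real.log 2 ≠ 0 := (Real.log_pos one_lt_two).ne'
    have e2 : (2 : ℝ) - 2 * ∑ i, ∑ j, √(p i) * √(q j) * c i j =
        ∑ i, ∑ j, (2 * p i * c i j - 2 * (√(p i) * √(q j) * c i j)) := by
      have e : (2 : ℝ) = ∑ i, ∑ j, 2 * p i * c i j := by
        calc (2 : ℝ) = 2 * ∑ i, ∑ j, p i * c i j := by rw [t1]; norm_num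
          _ = _ := by simp only [Finset.mul_sum, mul_assoc]
      simp only [Finset.sum_sub_distrib]
      rw [← e]
      simp only [Finset.mul_sum]
    rw [e2, Finset.sum_mul]
    refine Finset.sum_le_sum fun i _ => ?_
    rw [Finset.sum_mul]
    refine Finset.sum_le_sum fun j _ => ?_
    refine (qp_scalar (p i) (q j) (hp0 i) (hq0 j) (c i j) (hc0 i j) (hker i j)).trans (le_of_eq ?_)
    simp only [Real.logb]
    field_simp
  have hS0 : 0 ≤ relEnt ρ σ := by
    have : 0 ≤ relEnt ρ σ * Real.log 2 := by linarith
    exact nonneg_of_mul_nonneg_left this (Real.log_pos one_lt_two)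
  have hl1 : Real.log 2 ≤ 1 := by linarith [Real.log_two_lt_d9]
  -- trace norm
  set A := U * diagonal (fun i => ((√(p i) : ℝ) : ℂ)) * Uᴴ with hA
  set B := W * diagonal (fun i => ((√(q i) : ℝ) : ℂ)) * Wᴴ with hB
  have hAA : A * A = ρ := by
    rw [hA, hdd]; simp only [Real.mul_self_sqrt (hp0 _)]; exact hsρ.symm
  have hBB : B * B = σ := by
    rw [hB, hdd']; simp only [Real.mul_self_sqrt (hq0 _)]; exact hsσ.symm
  have hAH : Aᴴ = A := by
    simp only [hA, conjTranspose_mul, conjTranspose_conjTranspose, diagonal_conjTranspose,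
      Matrix.mul_assoc]
    congr 3; ext i; simp
  have hBH : Bᴴ = B := by
    simp only [hB, conjTranspose_mul, conjTranspose_conjTranspose, diagonal_conjTranspose,
      Matrix.mul_assoc]
    congr 3; ext i; simp
  have hAB : (A * B).trace = (f : ℂ) := qp_trace U W _ _
  have hcj : ∀ C D : Matrix n n ℂ, Dᴴ = D → (Xᴴ * C * X) * (Xᴴ * D * X)ᴴ = Xᴴ * (C * D) * X := by
    intro C D hD
    rw [conjTranspose_mul, conjTranspose_mul, conjTranspose_conjTranspose, hD]
    calc _ = Xᴴ * C * (X * Xᴴ) * D * X := by simp only [Matrix.mul_assoc]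
      _ = _ := by rw [hXX', Matrix.mul_one]; simp only [Matrix.mul_assoc]
  have htr : ∀ C : Matrix n n ℂ, (Xᴴ * C * X).trace = C.trace := by
    intro C
    rw [Matrix.trace_mul_comm, ← Matrix.mul_assoc, hXX', Matrix.one_mul]
  have key := qp_sum (Xᴴ * A * X) (Xᴴ * B * X)
  have hlam : ∀ k, l k = ∑ j, (Complex.normSq ((Xᴴ * A * X) k j) -
      Complex.normSq ((Xᴴ * B * X) k j)) := by
    intro k
    have h1 : (Xᴴ * A * X) * (Xᴴ * A * X)ᴴ - (Xᴴ * B * X) * (Xᴴ * B * X)ᴴ =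
        diagonal (fun i => (l i : ℂ)) := by
      rw [hcj _ _ hAH, hcj _ _ hBH, hAA, hBB, ← Matrix.sub_mul, ← Matrix.mul_sub]
      conv_lhs => rw [hsM]
      calc _ = (Xᴴ * X) * diagonal (fun i => (l i : ℂ)) * (Xᴴ * X) := by
            simp only [Matrix.mul_assoc]
        _ = _ := by rw [hXX, Matrix.one_mul, Matrix.mul_one]
    have h2 := congrArg (fun M : Matrix n n ℂ => M k k) h1
    simp only [Matrix.sub_apply, diagonal_apply_eq] at h2
    rw [Matrix.mul_apply (M := Xᴴ * A * X), Matrix.mul_apply (M := Xᴴ * B * X)] at h2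
    apply Complex.ofReal_injective
    rw [← h2]
    push_cast
    rw [Finset.sum_sub_distrib]
    simp only [Complex.normSq_eq_conj_mul_self, conjTranspose_apply, RCLike.star_def, mul_comm]
  rw [hcj _ _ hAH, hcj _ _ hBH, hcj _ _ hBH, htr, htr, htr, hAA, hBB, hAB, hρt, hσt] at key
  simp only [← hlam, Complex.one_re, Complex.ofReal_re] at key
  rw [ht]
  have hf0 : 0 ≤ f := Finset.sum_nonneg fun i _ => Finset.sum_nonneg fun j _ =>
    mul_nonneg (mul_nonneg (Real.sqrt_nonneg _) (Real.sqrt_nonneg _)) (hc0 i j)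
  have h9 : relEnt ρ σ * Real.log 2 ≤ relEnt ρ σ := mul_le_of_le_one_right hS0 hl1
  nlinarith
end
end
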